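/- There exists a bounded domain U in ℂ^m which is biholomorphic to the open unit ball of ℂ^m, a holomorphic map F : U → ℂ^m, and a sequence {p_n}_{n=0}^∞ ⊂ U with F(p_n) = p_{n+1} for all n, such that {p_n} is dense in U. -/

import Mathlib

/-!
The construction has a dynamical half and a geometric half, which meet in a density argument.

*Dynamics.* Let `tile m` be the product of `m` copies of the open square with vertices `0`, `1 ± i`,
`2`. It lies in the product of the sectors `|arg z| < π / 4`, on which the coordinatewise fourth
power `powFour` is injective. In each coordinate the affine map `z ↦ 2 (z - 1)` doubles the square
to the square with vertices `±2`, `±2i`, which up to its diagonals consists of the four rotations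
of the original square by powers of `i`. Rotating back gives an expanding, piecewise affine self-map
`tileMap` of the tile, and since `(iᵏ z)⁴ = z⁴` the map `w ↦ (2 (w^(1/4) - 1))⁴` on `powFour '' tile`
is holomorphic and semiconjugate to `tileMap`. If `U₀` is open and dense in the tile, Baire's theorem
yields an orbit of `tileMap` which stays in `U₀` and is dense (`exists_dense_orbit`). It remains to
choose `U₀` biholomorphic to the ball; the domain sought is then `powFour '' U₀`.

*Dimension at least two* (`hasDenseBall_of_two_le_finrank`). Every open convex set contains a dense
open set biholomorphic to the ball. A small ball is stretched towards the successive points of a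
countable dense set, with rapidly decreasing changes on an exhaustion by smaller balls, so that the
limit is again biholomorphic (`exists_limit_biholomorphism`). One stretching step is a composition
of shears `w ↦ w + χ (l w) v`, where `l v = 0` and `χ` is a polynomial in a fractional linear function
of `l w`, close to a peak function (`exists_shear`); each of them pulls a thin finger out of the set
along a segment. The segments form a tree that is chosen so that each new segment lies in a complex
hyperplane missing the earlier part of the tree; generic hyperplanes have this property. The pole
of `χ` is a complex hyperplane, whose removal does not disconnect a domain; hence the stretched ball
still has a connected neighbourhood with dense image in the convex set (`IsTame`), where the
next stretching can be performed.

*Dimension one* (`hasDenseBall_tile_one`). Here `U₀` is the whole square: the disc is mapped onto it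
by the Schwarz–Christoffel integral `∫ dz / √(1 - z⁴)`, which is injective because its derivative has
positive real part, and maps the four arcs between the points `iᵏ` into the sides of a square.
-/

open Metric
open Set Filter Topology

/-! ### Uniform limits of biholomorphisms -/

section Limits

/-- Uniform limits of holomorphic maps between complex Banach spaces are holomorphic. -/
lemma differentiableOn_of_tendstoUniformlyOn_seq {E G : Type*} [NormedAddCommGroup E]
    [NormedSpace ℂ E] [NormedAddCommGroup G] [NormedSpace ℂ G] [CompleteSpace G]
    {s : Set E} (hs : IsOpen s) {F : ℕ → E → G} {f : E → G}
    (hF : ∀ n, DifferentiableOn ℂ (F n) s) (h : TendstoUniformlyOn F f atTop s) :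
    DifferentiableOn ℂ f s := by
  intro x hx
  obtain ⟨δ, hδ, hball⟩ := Metric.isOpen_iff.1 hs x hx
  have hsub : ∀ y ∈ ball x (δ / 2), ball y (δ / 2) ⊆ s := fun y hy =>
    (ball_subset_ball' (by rw [mem_ball] at hy; linarith)).trans hball
  have hC : UniformCauchySeqOn (fun n => fderiv ℂ (F n)) atTop (ball x (δ / 2)) := by
    rw [Metric.uniformCauchySeqOn_iff]
    intro ε hε
    obtain ⟨N, hN⟩ := Metric.uniformCauchySeqOn_iff.1 h.uniformCauchySeqOn (ε * δ / 16)
      (by positivity)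
    refine ⟨N, fun a ha b hb y hy => ?_⟩
    have hys : y ∈ s := hsub y hy (mem_ball_self (by positivity))
    have hd : ∀ n, DifferentiableAt ℂ (F n) y := fun n =>
      (hF n y hys).differentiableAt (hs.mem_nhds hys)
    rw [dist_eq_norm, ← fderiv_sub (hd a) (hd b)]
    have key := Complex.norm_fderiv_le_div_of_mapsTo_ball (f := F a - F b) (c := y)
      (R₁ := δ / 2) (R₂ := ε * δ / 8)
      (((hF a).sub (hF b)).mono (hsub y hy)) ?_ (by positivity)
    · refine key.trans_lt ?_
      rw [div_lt_iff₀ (by positivity)]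
      nlinarith [mul_pos hε hδ]
    · intro z hz
      have h1 := hN a ha b hb z (hsub y hy hz)
      have h2 := hN a ha b hb y hys
      rw [mem_closedBall, dist_eq_norm]
      rw [dist_eq_norm] at h1 h2
      simp only [Pi.sub_apply]
      refine (norm_sub_le _ _).trans ?_
      linarith
  have hlim : ∀ y ∈ ball x (δ / 2), ∃ L, Tendsto (fun n => fderiv ℂ (F n) y) atTop (𝓝 L) :=
    fun y hy => cauchySeq_tendsto_of_complete (hC.cauchy_map hy)
  choose! g' hg' using hlim
  have hT := hC.tendstoUniformlyOn_of_tendsto hg'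
  have := hasFDerivAt_of_tendstoUniformlyOn isOpen_ball hT
    (fun n y hy => ((hF n y (hsub y hy (mem_ball_self (by positivity)))).differentiableAt
      (hs.mem_nhds (hsub y hy (mem_ball_self (by positivity))))).hasFDerivAt)
    (fun y hy => h.tendsto_at (hsub y hy (mem_ball_self (by positivity))))
    (mem_ball_self (by positivity : (0:ℝ) < δ / 2))
  exact this.differentiableAt.differentiableWithinAt

variable {E : Type*} [NormedAddCommGroup E] [NormedSpace ℂ E] [FiniteDimensional ℂ E]

/-- Limits of an inductive sequence of injections of the ball. The maps `g n` are bijections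
that are biholomorphic on a neighbourhood `D n` of the closed ball; on `closedBall 0 (r n)` the
transition maps `(g n)⁻¹ ∘ g (n+1)` and their inverses are `2⁻ⁿ`-close to the identity. Then the
limit of `g n` is a biholomorphism of the open ball onto an open set. -/
lemma exists_limit_biholomorphism (g : ℕ → E ≃ E) (r : ℕ → ℝ) (D : ℕ → Set E)
    (hrmono : Monotone r) (hr1 : ∀ n, r n < 1) (hrlim : Tendsto r atTop (𝓝 1))
    (h1 : ∀ n z, ‖z‖ ≤ r n → ‖g (n + 1) z - g n z‖ ≤ (1 / 2 : ℝ) ^ n)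
    (h2 : ∀ n z, ‖z‖ ≤ r n → ‖(g n).symm (g (n + 1) z) - z‖ ≤ (1 / 2 : ℝ) ^ n)
    (h3 : ∀ n z, ‖z‖ ≤ r n → ‖(g (n + 1)).symm (g n z) - z‖ ≤ (1 / 2 : ℝ) ^ n)
    (hBD : ∀ n, closedBall 0 1 ⊆ D n)
    (hgD : ∀ n, DifferentiableOn ℂ (g n) (D n)) (hgo : ∀ n, IsOpen (g n '' D n))
    (hsD : ∀ n, DifferentiableOn ℂ (g n).symm (g n '' D n)) :
    ∃ G H : E → E, DifferentiableOn ℂ G (ball 0 1) ∧ IsOpen (G '' ball 0 1) ∧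
      DifferentiableOn ℂ H (G '' ball 0 1) ∧ (∀ z ∈ ball (0 : E) 1, H (G z) = z) ∧
      (∀ w ∈ G '' ball 0 1, ∃ n, w ∈ g n '' D n) ∧
      (∀ n z, ‖z‖ ≤ r n → ‖G z - g n z‖ ≤ 2 * (1 / 2 : ℝ) ^ n) := by
  have : ProperSpace E := FiniteDimensional.proper ℂ E
  have : CompleteSpace E := FiniteDimensional.complete ℂ E
  set τ : ℕ → ℝ := fun n => 2 * (1 / 2 : ℝ) ^ n with hτ
  have hτs : ∀ n, τ n = (1 / 2 : ℝ) ^ n + τ (n + 1) := fun n => by simp only [hτ, pow_succ]; ring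
  have hτp : ∀ n, 0 < τ n := fun n => by simp only [hτ]; positivity
  have hτlim : Tendsto τ atTop (𝓝 0) := by
    have := (tendsto_pow_atTop_nhds_zero_of_lt_one (by norm_num : (0:ℝ) ≤ 1 / 2)
      (by norm_num)).const_mul 2
    rwa [mul_zero] at this
  -- convergence of sequences with geometric increments
  have geo : ∀ (u : ℕ → E) (k : ℕ), (∀ n, k ≤ n → ‖u (n + 1) - u n‖ ≤ (1 / 2 : ℝ) ^ n) →
      ∃ L, Tendsto u atTop (𝓝 L) ∧ ∀ n, k ≤ n → ‖L - u n‖ ≤ τ n := by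
    intro u k hu
    have hd : ∀ n p, k ≤ n → ‖u (n + p) - u n‖ ≤ τ n - τ (n + p) := by
      intro n p hn
      induction p with
      | zero => simp
      | succ p ih =>
        have e1 := hu (n + p) (by omega)
        have e2 := hτs (n + p)
        have e3 := norm_add_le (u (n + p + 1) - u (n + p)) (u (n + p) - u n)
        rw [sub_add_sub_cancel] at e3
        rw [← add_assoc]
        linarith
    have hc : CauchySeq (fun n => u (n + k)) := by
      refine cauchySeq_of_le_tendsto_0' (fun n => τ (n + k)) ?_ (hτlim.comp (tendsto_add_atTop_nat k))
      intro n p hnp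
      obtain ⟨q, rfl⟩ := Nat.exists_eq_add_of_le hnp
      have := hd (n + k) q (by omega)
      rw [show n + k + q = n + q + k by ring] at this
      rw [dist_comm, dist_eq_norm]
      linarith [hτp (n + q + k)]
    obtain ⟨L, hL⟩ := cauchySeq_tendsto_of_complete hc
    rw [tendsto_add_atTop_iff_nat k] at hL
    refine ⟨L, hL, fun n hn => ?_⟩
    have hlim : Tendsto (fun p => ‖u (n + p) - u n‖) atTop (𝓝 ‖L - u n‖) := by
      have := hL.comp (tendsto_add_atTop_nat n)
      refine ((this.sub_const (u n)).norm).congr (fun p => by simp [add_comm])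
    refine le_of_tendsto hlim (Eventually.of_forall fun p => ?_)
    linarith [hd n p hn, hτp (n + p)]
  have hexr : ∀ x : ℝ, x < 1 → ∃ k, ∀ n, k ≤ n → x + 2 * τ n < r n := by
    intro x hx
    have t1 : Tendsto (fun n => r n - 2 * τ n) atTop (𝓝 (1 - 2 * 0)) :=
      hrlim.sub (hτlim.const_mul 2)
    have := t1.eventually (lt_mem_nhds (show x < 1 - 2 * 0 by linarith))
    obtain ⟨k, hk⟩ := eventually_atTop.1 this
    exact ⟨k, fun n hn => by linarith [hk n hn]⟩
  -- the limit of the maps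
  have hGex : ∀ z ∈ ball (0 : E) 1, ∃ L, Tendsto (fun n => g n z) atTop (𝓝 L) ∧
      ∀ n, ‖z‖ ≤ r n → ‖L - g n z‖ ≤ τ n := by
    intro z hz
    obtain ⟨k, hk⟩ := hexr ‖z‖ (by simpa using hz)
    obtain ⟨L, hL, -⟩ := geo (fun n => g n z) k (fun n hn => h1 n z (by linarith [hk n hn, hτp n]))
    refine ⟨L, hL, fun n hn => ?_⟩
    obtain ⟨L', hL', hb⟩ := geo (fun n => g n z) n (fun j hj => h1 j z (hn.trans (hrmono hj)))
    rw [tendsto_nhds_unique hL hL']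
    exact hb n le_rfl
  choose! G hG hGb using hGex
  have hrball : ∀ n (z : E), ‖z‖ ≤ r n → z ∈ ball (0 : E) 1 := fun n z hz => by
    simpa using hz.trans_lt (hr1 n)
  have hGdiff : DifferentiableOn ℂ G (ball 0 1) := by
    intro z hz
    obtain ⟨k, hk⟩ := hexr ‖z‖ (by simpa using hz)
    have hzk : ‖z‖ < r k := by linarith [hk k le_rfl, hτp k]
    have : DifferentiableOn ℂ G (ball 0 (r k)) := by
      refine differentiableOn_of_tendstoUniformlyOn_seq isOpen_ball (F := fun n => g (k + n))
        (fun n => (hgD _).mono ((ball_subset_closedBall.trans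
          (closedBall_subset_closedBall (hr1 k).le)).trans (hBD _))) ?_
      rw [Metric.tendstoUniformlyOn_iff]
      intro ε hε
      have := (hτlim.comp (tendsto_add_atTop_nat k)).eventually (gt_mem_nhds hε)
      filter_upwards [this] with n hn y hy
      have hy' : ‖y‖ ≤ r k := (by simpa using hy : ‖y‖ < r k).le
      rw [dist_eq_norm]
      refine (hGb y (hrball k y hy') (k + n) (hy'.trans (hrmono (by omega)))).trans_lt ?_
      simpa [add_comm] using hn
    exact ((this z (by simpa using hzk)).differentiableAt
      (isOpen_ball.mem_nhds (by simpa using hzk))).differentiableWithinAt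
  -- inverse transitions
  have hτmono : ∀ a b, a ≤ b → τ b ≤ τ a := fun a b hab => by
    simp only [hτ]
    exact mul_le_mul_of_nonneg_left (pow_le_pow_of_le_one (by norm_num) (by norm_num) hab)
      (by norm_num)
  have inv1 : ∀ k y, ‖y‖ + τ k ≤ r k → ∀ p, ‖(g (k + p)).symm (g k y) - y‖ ≤ τ k - τ (k + p) := by
    intro k y hy p
    induction p with
    | zero => simp
    | succ p ih =>
      set u := (g (k + p)).symm (g k y) with hu
      have hn : ‖u‖ ≤ r (k + p) := by
        have := norm_sub_norm_le u y
        have := hrmono (show k ≤ k + p by omega)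
        linarith [hτp (k + p)]
      have e1 := h3 (k + p) u hn
      rw [hu, Equiv.apply_symm_apply, ← hu] at e1
      have e3 := norm_add_le ((g (k + p + 1)).symm (g k y) - u) (u - y)
      rw [sub_add_sub_cancel] at e3
      rw [← add_assoc]
      linarith [hτs (k + p)]
  have inv1' : ∀ k y, ‖y‖ + τ k ≤ r k → ∀ n, k ≤ n → ‖(g n).symm (g k y) - y‖ ≤ τ k - τ n := by
    intro k y hy n hn
    obtain ⟨p, rfl⟩ := Nat.exists_eq_add_of_le hn
    exact inv1 k y hy p
  have inv2 : ∀ p k z, ‖z‖ + τ k ≤ r k → ‖(g k).symm (g (k + p) z) - z‖ ≤ τ k - τ (k + p) := by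
    intro p
    induction p with
    | zero => intro k z _; simp
    | succ p ih =>
      intro k z hz
      have hz' : ‖z‖ + τ (k + 1) ≤ r (k + 1) := by
        linarith [hτmono k (k + 1) (by omega), hrmono (show k ≤ k + 1 by omega)]
      have := ih (k + 1) z hz'
      rw [show k + 1 + p = k + (p + 1) by ring] at this
      set u := (g (k + 1)).symm (g (k + (p + 1)) z) with hu
      have hn : ‖u‖ ≤ r k := by
        have := norm_sub_norm_le u z
        linarith [hτp (k + (p + 1)), hτmono k (k + 1) (by omega)]
      have e1 := h2 k u hn
      rw [hu, Equiv.apply_symm_apply, ← hu] at e1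
      have e3 := norm_add_le ((g k).symm (g (k + (p + 1)) z) - u) (u - z)
      rw [sub_add_sub_cancel] at e3
      linarith [hτs k]
  -- the exhausting open sets
  set W : ℕ → Set E := fun k => g k '' ball 0 (r k - τ k) with hW
  have hbD : ∀ k n, ball (0 : E) (r k - τ k) ⊆ D n := fun k n =>
    (ball_subset_closedBall.trans (closedBall_subset_closedBall
      (by linarith [hr1 k, hτp k]))).trans (hBD n)
  have hWo : ∀ k, IsOpen (W k) := by
    intro k
    have : W k = g k '' D k ∩ (g k).symm ⁻¹' ball 0 (r k - τ k) := by
      ext w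
      simp only [hW, mem_image_equiv, mem_inter_iff, mem_preimage]
      exact ⟨fun h => ⟨hbD k k h, h⟩, fun h => h.2⟩
    rw [this]
    exact (hsD k).continuousOn.isOpen_inter_preimage (hgo k) isOpen_ball
  have hHex : ∀ w ∈ ⋃ k, W k, ∃ L, Tendsto (fun n => (g n).symm w) atTop (𝓝 L) := by
    intro w hw
    obtain ⟨k, y, hy, rfl⟩ := mem_iUnion.1 hw
    have hy' : ‖y‖ + τ k ≤ r k := by
      have : ‖y‖ < r k - τ k := by simpa using hy
      linarith
    obtain ⟨L, hL, -⟩ := geo (fun n => (g n).symm (g k y)) k (fun n hn => by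
      have e := inv1' k y hy' n hn
      have := norm_sub_norm_le ((g n).symm (g k y)) y
      have := h3 n ((g n).symm (g k y)) (by linarith [hrmono hn, hτp n])
      simpa using this)
    exact ⟨L, hL⟩
  choose! H hH using hHex
  have hWin : ∀ k y, ‖y‖ + τ k < r k → g k y ∈ W k := fun k y hy =>
    ⟨y, by simp; linarith, rfl⟩
  have hWiU : ∀ k y, ‖y‖ + τ k < r k → g k y ∈ ⋃ k, W k := fun k y hy =>
    mem_iUnion.2 ⟨k, hWin k y hy⟩
  have hHb : ∀ k y, ‖y‖ + τ k < r k → ∀ n, k ≤ n → ‖H (g k y) - (g n).symm (g k y)‖ ≤ τ n := by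
    intro k y hy n hn
    obtain ⟨L, hL, hb⟩ := geo (fun n => (g n).symm (g k y)) k (fun n hn => by
      have e := inv1' k y hy.le n hn
      have := norm_sub_norm_le ((g n).symm (g k y)) y
      have := h3 n ((g n).symm (g k y)) (by linarith [hrmono hn, hτp n])
      simpa using this)
    rw [tendsto_nhds_unique (hH _ (hWiU k y hy)) hL]
    exact hb n hn
  have hHdiffW : ∀ k, DifferentiableOn ℂ H (W k) := by
    intro k
    refine differentiableOn_of_tendstoUniformlyOn_seq (hWo k) (F := fun n => (g (k + n)).symm)
      (fun n => (hsD _).mono ?_) ?_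
    · rintro _ ⟨y, hy, rfl⟩
      have hy' : ‖y‖ < r k - τ k := by simpa using hy
      have e := inv1 k y (by linarith) n
      have := norm_sub_norm_le ((g (k + n)).symm (g k y)) y
      refine ⟨(g (k + n)).symm (g k y), hBD _ ?_, by simp⟩
      rw [mem_closedBall_zero_iff]
      linarith [hr1 k, hτp (k + n)]
    · rw [Metric.tendstoUniformlyOn_iff]
      intro ε hε
      have := (hτlim.comp (tendsto_add_atTop_nat k)).eventually (gt_mem_nhds hε)
      filter_upwards [this] with n hn
      rintro _ ⟨y, hy, rfl⟩
      have hy' : ‖y‖ < r k - τ k := by simpa using hy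
      rw [dist_eq_norm]
      refine (hHb k y (by linarith) (k + n) (by omega)).trans_lt ?_
      simpa [add_comm] using hn
  have hGH : ∀ w ∈ ⋃ k, W k, H w ∈ ball (0 : E) 1 ∧ G (H w) = w := by
    intro w hw
    have hlim := hH w hw
    obtain ⟨k, y, hy, rfl⟩ := mem_iUnion.1 hw
    have hy' : ‖y‖ < r k - τ k := by simpa using hy
    have hnb : ∀ n, k ≤ n → ‖(g n).symm (g k y)‖ ≤ r k := by
      intro n hn
      have e := inv1' k y (by linarith) n hn
      have := norm_sub_norm_le ((g n).symm (g k y)) y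
      linarith [hτp n]
    have hHn : ‖H (g k y)‖ ≤ r k :=
      le_of_tendsto hlim.norm ((eventually_ge_atTop k).mono hnb)
    have hHball := hrball k _ hHn
    refine ⟨hHball, ?_⟩
    have hc : ContinuousAt G (H (g k y)) :=
      (hGdiff.continuousOn).continuousAt (isOpen_ball.mem_nhds hHball)
    have l1 : Tendsto (fun n => G ((g n).symm (g k y))) atTop (𝓝 (G (H (g k y)))) :=
      hc.tendsto.comp hlim
    have l2 : Tendsto (fun n => G ((g n).symm (g k y))) atTop (𝓝 (g k y)) := by
      rw [tendsto_iff_norm_sub_tendsto_zero]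
      refine squeeze_zero' (Eventually.of_forall fun _ => norm_nonneg _) ?_ hτlim
      filter_upwards [eventually_ge_atTop k] with n hn
      have := hGb _ (hrball k _ (hnb n hn)) n ((hnb n hn).trans (hrmono hn))
      simpa using this
    exact tendsto_nhds_unique l1 l2
  have hGW : ∀ z ∈ ball (0 : E) 1, ∀ k, ‖z‖ + 2 * τ k < r k →
      G z ∈ W k ∧ ‖(g k).symm (G z) - z‖ ≤ τ k := by
    intro z hz k hk
    have hev : ∀ n, k ≤ n → ‖(g k).symm (g n z) - z‖ ≤ τ k := by
      intro n hn
      obtain ⟨p, rfl⟩ := Nat.exists_eq_add_of_le hn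
      have := inv2 p k z (by linarith [hτp k])
      linarith [hτp (k + p)]
    have hcomp : IsCompact (g k '' closedBall 0 (‖z‖ + τ k)) := by
      refine (isCompact_closedBall _ _).image_of_continuousOn ((hgD k).continuousOn.mono ?_)
      exact (closedBall_subset_closedBall (by linarith [hr1 k, hτp k])).trans (hBD k)
    have hmem : G z ∈ g k '' closedBall 0 (‖z‖ + τ k) := by
      refine hcomp.isClosed.mem_of_tendsto (hG z hz) ?_
      filter_upwards [eventually_ge_atTop k] with n hn
      refine ⟨(g k).symm (g n z), ?_, by simp⟩
      have := norm_sub_norm_le ((g k).symm (g n z)) z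
      rw [mem_closedBall_zero_iff]
      linarith [hev n hn]
    have hWk : G z ∈ W k := by
      obtain ⟨y, hy, hyG⟩ := hmem
      rw [← hyG]
      refine hWin k y ?_
      rw [mem_closedBall_zero_iff] at hy
      linarith
    refine ⟨hWk, ?_⟩
    have hc : ContinuousAt (g k).symm (G z) :=
      (hsD k).continuousOn.continuousAt ((hgo k).mem_nhds (image_mono (hbD k k) hWk))
    have := hc.tendsto.comp (hG z hz)
    exact le_of_tendsto (this.sub_const z).norm ((eventually_ge_atTop k).mono hev)
  have hHG : ∀ z ∈ ball (0 : E) 1, H (G z) = z := by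
    intro z hz
    obtain ⟨k, hk⟩ := hexr ‖z‖ (by simpa using hz)
    have hmem : G z ∈ ⋃ k, W k := mem_iUnion.2 ⟨k, (hGW z hz k (hk k le_rfl)).1⟩
    refine tendsto_nhds_unique (hH _ hmem) ?_
    rw [tendsto_iff_norm_sub_tendsto_zero]
    refine squeeze_zero' (Eventually.of_forall fun _ => norm_nonneg _) ?_ hτlim
    filter_upwards [eventually_ge_atTop k] with n hn
    exact (hGW z hz n (hk n hn)).2
  have himg : G '' ball 0 1 = ⋃ k, W k := by
    ext w
    constructor
    · rintro ⟨z, hz, rfl⟩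
      obtain ⟨k, hk⟩ := hexr ‖z‖ (by simpa using hz)
      exact mem_iUnion.2 ⟨k, (hGW z hz k (hk k le_rfl)).1⟩
    · intro hw
      exact ⟨H w, (hGH w hw).1, (hGH w hw).2⟩
  refine ⟨G, H, hGdiff, ?_, ?_, hHG, ?_, fun n z hz => hGb z (hrball n z hz) n hz⟩
  · rw [himg]; exact isOpen_iUnion hWo
  · rw [himg]
    intro w hw
    obtain ⟨k, hk⟩ := mem_iUnion.1 hw
    exact ((hHdiffW k w hk).differentiableAt ((hWo k).mem_nhds hk)).differentiableWithinAt
  · rw [himg]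
    intro w hw
    obtain ⟨k, hk⟩ := mem_iUnion.1 hw
    exact ⟨k, image_mono (hbD k k) hk⟩

end Limits

/-! ### Complements of hyperplanes and tame bijections -/

section Shears

variable {E : Type*} [NormedAddCommGroup E] [NormedSpace ℂ E]

/-- Removing from a preconnected set `C` the complement of a dense set `N` leaves a preconnected
set, provided this is true locally. -/
lemma isPreconnected_inter_of_local {X : Type*} [TopologicalSpace X] {C N : Set X}
    (hC : IsPreconnected C) (hN : Dense N)
    (hloc : ∀ x ∈ C, ∃ V, IsOpen V ∧ x ∈ V ∧ V ⊆ C ∧ IsPreconnected (V ∩ N)) :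
    IsPreconnected (C ∩ N) := by
  rw [isPreconnected_iff_subset_of_disjoint]
  intro u v hu hv huv hdisj
  have hd : ∀ y, y ∈ C ∩ N → y ∈ u → y ∈ v → False := fun y hy h1 h2 => by
    have : y ∈ (C ∩ N) ∩ (u ∩ v) := ⟨hy, h1, h2⟩
    rw [hdisj] at this; exact this
  set u' : Set X := ⋃₀ {V | IsOpen V ∧ V ⊆ C ∧ V ∩ N ⊆ u}
  set v' : Set X := ⋃₀ {V | IsOpen V ∧ V ⊆ C ∧ V ∩ N ⊆ v}
  have hu' : IsOpen u' := isOpen_sUnion fun V hV => hV.1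
  have hv' : IsOpen v' := isOpen_sUnion fun V hV => hV.1
  have hcov : C ⊆ u' ∪ v' := by
    intro x hx
    obtain ⟨V, hVo, hxV, hsub, hpre⟩ := hloc x hx
    have hsub' : V ∩ N ⊆ C ∩ N := inter_subset_inter_left _ hsub
    rcases isPreconnected_iff_subset_of_disjoint.1 hpre u v hu hv (hsub'.trans huv) (by
      rw [eq_empty_iff_forall_notMem]
      rintro y ⟨h1, h2, h3⟩
      exact hd y (hsub' h1) h2 h3) with h | h
    · exact Or.inl ⟨V, ⟨hVo, hsub, h⟩, hxV⟩
    · exact Or.inr ⟨V, ⟨hVo, hsub, h⟩, hxV⟩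
  by_contra hcon
  rw [not_or, not_subset, not_subset] at hcon
  obtain ⟨⟨a, ha, hau⟩, ⟨b, hb, hbv⟩⟩ := hcon
  have hav : a ∈ v' := by
    rcases hcov ha.1 with ⟨V, hV, h⟩ | h
    · exact absurd (hV.2.2 ⟨h, ha.2⟩) hau
    · exact h
  have hbu : b ∈ u' := by
    rcases hcov hb.1 with h | ⟨V, hV, h⟩
    · exact h
    · exact absurd (hV.2.2 ⟨h, hb.2⟩) hbv
  obtain ⟨x, hx, ⟨V₁, hV₁, hx₁⟩, ⟨V₂, hV₂, hx₂⟩⟩ :=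
    hC u' v' hu' hv' hcov ⟨b, hb.1, hbu⟩ ⟨a, ha.1, hav⟩
  obtain ⟨y, ⟨hy₁, hy₂⟩, hyN⟩ := hN.inter_open_nonempty _ (hV₁.1.inter hV₂.1) ⟨x, hx₁, hx₂⟩
  exact hd y ⟨hV₁.2.1 hy₁, hyN⟩ (hV₁.2.2 ⟨hy₁, hyN⟩) (hV₂.2.2 ⟨hy₂, hyN⟩)

/-- Two points of an open convex set off a complex hyperplane are joined, off the hyperplane, by
two segments: the midpoint is moved in the direction `i (y - x)` if the segment `[x, y]` itself
may meet the hyperplane. -/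
lemma isPreconnected_convex_diff_hyperplane {s : Set E} (hs : IsOpen s) (hc : Convex ℝ s)
    (l : E →L[ℂ] ℂ) (c : ℂ) : IsPreconnected (s ∩ {w | l w ≠ c}) := by
  refine isPreconnected_of_forall_pair fun x hx y hy => ?_
  set d := l y - l x with hd
  obtain ⟨σ, hσs, hσ1, hσ2⟩ : ∃ σ : ℝ, x + ((1 / 2 : ℂ) + σ * Complex.I) • (y - x) ∈ s ∧
      (∀ t : ℝ, l x + t * ((1 / 2 : ℂ) + σ * Complex.I) * d ≠ c) ∧
      (∀ t : ℝ, l x + ((1 - t) * ((1 / 2 : ℂ) + σ * Complex.I) + t) * d ≠ c) := by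
    have hmid : x + ((1 / 2 : ℂ) + (0 : ℝ) * Complex.I) • (y - x) ∈ s := by
      have := hc hx.1 hy.1 (by norm_num : (0:ℝ) ≤ 1/2) (by norm_num : (0:ℝ) ≤ 1/2) (by norm_num)
      convert this using 1
      rw [← Complex.coe_smul, ← Complex.coe_smul]
      push_cast
      module
    have hcont : Continuous (fun σ : ℝ => x + ((1 / 2 : ℂ) + σ * Complex.I) • (y - x)) := by
      fun_prop
    have hev : ∀ᶠ σ : ℝ in 𝓝 0, x + ((1 / 2 : ℂ) + σ * Complex.I) • (y - x) ∈ s :=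
      hcont.continuousAt.preimage_mem_nhds (hs.mem_nhds hmid)
    by_cases hd0 : d = 0
    · exact ⟨0, hmid, fun t => by simpa [hd0] using hx.2, fun t => by simpa [hd0] using hx.2⟩
    have hk : ∀ κ : ℂ, l x + κ * d = c → κ = (c - l x) / d := fun κ h => by
      rw [eq_div_iff hd0, ← h]; ring
    by_cases him : ((c - l x) / d).im = 0
    · obtain ⟨σ, hσ, hσ0⟩ : ∃ σ : ℝ, x + ((1 / 2 : ℂ) + σ * Complex.I) • (y - x) ∈ s ∧ 0 < σ := by
        have h1 : ∀ᶠ σ : ℝ in 𝓝[>] 0, x + ((1 / 2 : ℂ) + σ * Complex.I) • (y - x) ∈ s :=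
          hev.filter_mono nhdsWithin_le_nhds
        exact (h1.and self_mem_nhdsWithin).exists
      refine ⟨σ, hσ, fun t h => ?_, fun t h => ?_⟩
      · have := hk _ h
        rw [← this] at him
        have ht : t = 0 := by
          have : t * σ = 0 := by simpa using him
          exact (mul_eq_zero.1 this).resolve_right hσ0.ne'
        rw [ht] at h
        exact hx.2 (by simpa using h)
      · have := hk _ h
        rw [← this] at him
        have ht : t = 1 := by
          have : (1 - t) * σ = 0 := by simpa using him
          linarith [(mul_eq_zero.1 this).resolve_right hσ0.ne']
        rw [ht] at h
        refine hy.2 ?_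
        rw [← h, hd]; push_cast; ring
    · refine ⟨0, hmid, fun t h => him ?_, fun t h => him ?_⟩
      · rw [← hk _ h]; simp
      · rw [← hk _ h]; simp
  set w := x + ((1 / 2 : ℂ) + σ * Complex.I) • (y - x) with hw
  have hlw : l w = l x + ((1 / 2 : ℂ) + σ * Complex.I) * d := by
    rw [hw, map_add, map_smul, map_sub, smul_eq_mul]
  refine ⟨segment ℝ x w ∪ segment ℝ w y, ?_, Or.inl (left_mem_segment _ _ _),
    Or.inr (right_mem_segment _ _ _), ?_⟩
  · rintro z (hz | hz)
    · refine ⟨hc.segment_subset hx.1 hσs hz, ?_⟩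
      rw [segment_eq_image'] at hz
      obtain ⟨t, -, rfl⟩ := hz
      have := hσ1 t
      simp only [mem_ofPred_eq, map_add, ← Complex.coe_smul, map_smul, map_sub, hlw, smul_eq_mul]
      convert this using 1; ring
    · refine ⟨hc.segment_subset hσs hy.1 hz, ?_⟩
      rw [segment_eq_image'] at hz
      obtain ⟨t, -, rfl⟩ := hz
      have := hσ2 t
      simp only [mem_ofPred_eq, map_add, ← Complex.coe_smul, map_smul, map_sub, hlw, smul_eq_mul]
      convert this using 1; rw [hd]; ring
  · exact (convex_segment _ _).isPreconnected.union w (right_mem_segment _ _ _)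
      (left_mem_segment _ _ _) (convex_segment _ _).isPreconnected

lemma dense_hyperplane_compl {l : E →L[ℂ] ℂ} (hl : l ≠ 0) (c : ℂ) : Dense {w | l w ≠ c} :=
  (dense_compl_singleton c).preimage (l.isOpenMap_of_ne_zero hl)

lemma isPreconnected_diff_hyperplane {C : Set E} (hCo : IsOpen C) (hC : IsPreconnected C)
    {l : E →L[ℂ] ℂ} (hl : l ≠ 0) (c : ℂ) : IsPreconnected (C ∩ {w | l w ≠ c}) := by
  refine isPreconnected_inter_of_local hC (dense_hyperplane_compl hl c) fun x hx => ?_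
  obtain ⟨δ, hδ, hb⟩ := Metric.isOpen_iff.1 hCo x hx
  exact ⟨ball x δ, isOpen_ball, mem_ball_self hδ, hb,
    isPreconnected_convex_diff_hyperplane isOpen_ball (convex_ball x δ) l c⟩

/-- A bijection `Θ` of `E` is *tame* if, inside every open connected set `C` containing the image
of the closed unit ball, it restricts to a biholomorphism from an open connected neighbourhood
of the closed unit ball onto an open dense subset of `C`. -/
def IsTame (Θ : E ≃ E) : Prop :=
  ∀ C : Set E, IsOpen C → IsPreconnected C → Θ '' closedBall 0 1 ⊆ C →
    ∃ C' : Set E, IsOpen C' ∧ IsPreconnected C' ∧ closedBall 0 1 ⊆ C' ∧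
      DifferentiableOn ℂ Θ C' ∧ Θ '' C' ⊆ C ∧ IsOpen (Θ '' C') ∧ C ⊆ closure (Θ '' C') ∧
      DifferentiableOn ℂ Θ.symm (Θ '' C')

lemma isTame_refl : IsTame (Equiv.refl E) := by
  intro C hCo hC hB
  refine ⟨C, hCo, hC, by simpa using hB, differentiableOn_id, by simp, by simpa using hCo,
    by simpa using subset_closure, differentiableOn_id⟩

/-- Tame bijections are stable under composition with a bijection preserving the fibres of a
functional `l` and biholomorphic off the hyperplane `l = c`, if this hyperplane misses the image
of the closed ball. -/
lemma IsTame.trans {Θ ψ : E ≃ E} (hΘ : IsTame Θ) {l : E →L[ℂ] ℂ} (hl : l ≠ 0) {c : ℂ}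
    (hψ : DifferentiableOn ℂ ψ {w | l w ≠ c}) (hψs : DifferentiableOn ℂ ψ.symm {w | l w ≠ c})
    (hlψ : ∀ w, l (ψ w) = l w) (havoid : ∀ z ∈ closedBall (0 : E) 1, l (Θ z) ≠ c) :
    IsTame (Θ.trans ψ) := by
  set N : Set E := {w | l w ≠ c} with hN
  have hNo : IsOpen N := isOpen_ne_fun l.continuous continuous_const
  have hlψs : ∀ w, l (ψ.symm w) = l w := fun w => by
    conv_rhs => rw [← ψ.apply_symm_apply w, hlψ]
  intro C hCo hC hB
  have hC1 : ψ.symm '' (C ∩ N) = N ∩ ψ ⁻¹' C := by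
    ext w
    simp only [mem_image_equiv, Equiv.symm_symm, mem_inter_iff, mem_preimage, hN, mem_ofPred_eq,
      hlψ]
    tauto
  obtain ⟨C', hC'o, hC', hBC', hd, hsub, ho, hdense, hds⟩ := hΘ (N ∩ ψ ⁻¹' C)
    (hψ.continuousOn.isOpen_inter_preimage hNo hCo)
    (by rw [← hC1]
        exact (isPreconnected_diff_hyperplane hCo hC hl c).image _
          (hψs.continuousOn.mono inter_subset_right))
    (by rintro _ ⟨z, hz, rfl⟩
        exact ⟨havoid z hz, hB ⟨z, hz, rfl⟩⟩)
  have himg : (Θ.trans ψ) '' C' = N ∩ ψ.symm ⁻¹' (Θ '' C') := by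
    ext w
    simp only [mem_image_equiv, Equiv.symm_trans_apply, mem_inter_iff, mem_preimage]
    refine ⟨fun h => ⟨?_, h⟩, fun h => h.2⟩
    have := (hsub ⟨_, h, rfl⟩).1
    simpa [hN, hlψs] using this
  refine ⟨C', hC'o, hC', hBC', ?_, ?_, ?_, ?_, ?_⟩
  · exact hψ.comp hd fun z hz => (hsub ⟨z, hz, rfl⟩).1
  · rintro _ ⟨z, hz, rfl⟩
    exact (hsub ⟨z, hz, rfl⟩).2
  · rw [himg]
    exact hψs.continuousOn.isOpen_inter_preimage hNo ho
  · have h1 : C ⊆ closure (C ∩ N) := fun x hx =>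
      ((dense_hyperplane_compl hl c).open_subset_closure_inter hCo) hx
    refine h1.trans (closure_minimal ?_ isClosed_closure)
    intro w hw
    have hw' : ψ.symm w ∈ N ∩ ψ ⁻¹' C := by
      rw [← hC1]; exact ⟨w, hw, rfl⟩
    have hcl := hdense hw'
    have hcont : ContinuousAt ψ (ψ.symm w) :=
      hψ.continuousOn.continuousAt (hNo.mem_nhds hw'.1)
    have := mem_closure_image hcont hcl
    rw [ψ.apply_symm_apply] at this
    rwa [Equiv.coe_trans, image_comp]
  · rw [himg]
    intro w hw
    have h1 : DifferentiableAt ℂ Θ.symm (ψ.symm w) :=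
      (hds _ hw.2).differentiableAt (ho.mem_nhds hw.2)
    have h2 : DifferentiableAt ℂ ψ.symm w := (hψs w hw.1).differentiableAt (hNo.mem_nhds hw.1)
    exact (h1.comp w h2).differentiableWithinAt

end Shears

/-! ### Peak polynomials and shears -/

section Peak

/-- Sums `u ^ k₁ + ⋯ + u ^ kₙ` with rapidly increasing exponents: at each point of `L` the initial
terms are close to `1`, the final ones are close to `0`, and at most one term is neither. -/
lemma exists_polynomial_near_interval {L : Set ℂ} (hL : IsCompact L)
    (h1 : ∀ u ∈ L, u = 1 ∨ ‖u‖ < 1) {δ : ℝ} (hδ : 0 < δ) (n : ℕ) :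
    ∀ η : ℝ, 0 < η → ∃ S : Polynomial ℂ, S.eval 1 = n ∧
      (∀ u ∈ L, ∃ s : ℝ, 0 ≤ s ∧ s ≤ n ∧ ‖S.eval u - s‖ ≤ 1 + η) ∧
      (∀ u ∈ L, δ ≤ ‖u - 1‖ → ‖S.eval u‖ ≤ η) := by
  induction n with
  | zero =>
    intro η hη
    exact ⟨0, by simp, fun u _ => ⟨0, by simp, by simp, by simp; linarith⟩, fun u _ _ => by
      simpa using hη.le⟩
  | succ n ih =>
    intro η hη
    obtain ⟨S, hS1, hS, hSfar⟩ := ih (η / 2) (by positivity)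
    obtain ⟨δ', hδ', hSc⟩ := Metric.continuousAt_iff.1 (S.continuous.continuousAt (x := 1)) η hη
    set δ₁ := min δ δ' with hδ₁
    have hδ₁p : 0 < δ₁ := lt_min hδ hδ'
    -- on the part of `L` away from `1` the powers tend to zero uniformly
    obtain ⟨k, hk⟩ : ∃ k : ℕ, ∀ u ∈ L, δ₁ ≤ ‖u - 1‖ → ‖u ^ k‖ ≤ η / 2 := by
      have hcomp : IsCompact (L ∩ {u | δ₁ ≤ ‖u - 1‖}) :=
        hL.inter_right (isClosed_le continuous_const (by fun_prop))
      rcases (L ∩ {u | δ₁ ≤ ‖u - 1‖}).eq_empty_or_nonempty with he | hne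
      · refine ⟨0, fun u hu hd => ?_⟩
        have : u ∈ L ∩ {u | δ₁ ≤ ‖u - 1‖} := ⟨hu, hd⟩
        rw [he] at this; exact this.elim
      · obtain ⟨u₀, hu₀, hmax⟩ := hcomp.exists_isMaxOn hne continuous_norm.continuousOn
        have hlt : ‖u₀‖ < 1 := by
          rcases h1 u₀ hu₀.1 with h | h
          · have := hu₀.2
            simp only [mem_ofPred_eq, h, sub_self, norm_zero] at this
            linarith
          · exact h
        obtain ⟨k, hk⟩ := exists_pow_lt_of_lt_one (show 0 < η / 2 by positivity) hlt
        refine ⟨k, fun u hu hd => ?_⟩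
        rw [norm_pow]
        exact (pow_le_pow_left₀ (norm_nonneg _) (hmax ⟨hu, hd⟩) k).trans hk.le
    refine ⟨S + Polynomial.X ^ k, by simp [hS1], fun u hu => ?_, fun u hu hd => ?_⟩
    · have hu1 : ‖u ^ k‖ ≤ 1 := by
        rw [norm_pow]
        refine pow_le_one₀ (norm_nonneg _) ?_
        rcases h1 u hu with rfl | h
        · simp
        · exact h.le
      by_cases hd : δ₁ ≤ ‖u - 1‖
      · obtain ⟨s, hs0, hsn, hs⟩ := hS u hu
        refine ⟨s, hs0, by push_cast; linarith, ?_⟩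
        simp only [Polynomial.eval_add, Polynomial.eval_pow, Polynomial.eval_X]
        rw [add_sub_right_comm]
        linarith [norm_add_le (S.eval u - s) (u ^ k), hk u hu hd]
      · refine ⟨n, by positivity, by push_cast; linarith, ?_⟩
        have := hSc (x := u) (by
          rw [dist_eq_norm]; exact (not_le.1 hd).trans_le (min_le_right _ _))
        rw [hS1, dist_eq_norm] at this
        simp only [Polynomial.eval_add, Polynomial.eval_pow, Polynomial.eval_X]
        rw [add_sub_right_comm]
        have h3 := norm_add_le (S.eval u - ((n : ℝ) : ℂ)) (u ^ k)
        push_cast at h3 ⊢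
        linarith
    · simp only [Polynomial.eval_add, Polynomial.eval_pow, Polynomial.eval_X]
      linarith [norm_add_le (S.eval u) (u ^ k), hk u hu ((min_le_left _ _).trans hd),
        hSfar u hu hd]

/-- Peak polynomials with values close to `[0, 1]`. -/
lemma exists_peak_polynomial {L : Set ℂ} (hL : IsCompact L)
    (h1 : ∀ u ∈ L, u = 1 ∨ ‖u‖ < 1) {δ ε : ℝ} (hδ : 0 < δ) (hε : 0 < ε) :
    ∃ S : Polynomial ℂ, S.eval 1 = 1 ∧
      (∀ u ∈ L, ∃ s : ℝ, 0 ≤ s ∧ s ≤ 1 ∧ ‖S.eval u - s‖ < ε) ∧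
      (∀ u ∈ L, δ ≤ ‖u - 1‖ → ‖S.eval u‖ < ε) := by
  obtain ⟨n, hn⟩ := exists_nat_gt (2 / ε)
  have hn0 : (0 : ℝ) < n := (by positivity : 0 < 2 / ε).trans hn
  have hnε : 2 / (n : ℝ) < ε := by
    rw [div_lt_iff₀ hn0]; rw [div_lt_iff₀ hε] at hn; linarith
  have hnC : (n : ℂ) ≠ 0 := by exact_mod_cast hn0.ne'
  obtain ⟨S, hS1, hS, hSfar⟩ := exists_polynomial_near_interval hL h1 hδ n 1 one_pos
  refine ⟨Polynomial.C (n : ℂ)⁻¹ * S, by simp [hS1, hnC], fun u hu => ?_, fun u hu hd => ?_⟩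
  · obtain ⟨s, hs0, hsn, hs⟩ := hS u hu
    refine ⟨s / n, by positivity, (div_le_one hn0).2 hsn, ?_⟩
    have : (Polynomial.C (n : ℂ)⁻¹ * S).eval u - ((s / n : ℝ) : ℂ)
        = (n : ℂ)⁻¹ * (S.eval u - s) := by
      simp; field_simp
    rw [this, norm_mul, norm_inv, Complex.norm_natCast, inv_mul_eq_div]
    refine lt_of_le_of_lt ?_ hnε
    gcongr; linarith
  · rw [Polynomial.eval_mul, Polynomial.eval_C, norm_mul, norm_inv, Complex.norm_natCast,
      inv_mul_eq_div]
    refine lt_of_le_of_lt ?_ hnε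
    gcongr
    linarith [hSfar u hu hd]

end Peak

section Fingers

variable {E : Type*} [NormedAddCommGroup E] [NormedSpace ℂ E]

/-- The shear `w ↦ w + χ (l w) • v` along a vector `v` in the kernel of `l`. -/
noncomputable def shear (χ : ℂ → ℂ) (l : E →L[ℂ] ℂ) (v : E) (hv : l v = 0) : E ≃ E where
  toFun w := w + χ (l w) • v
  invFun w := w - χ (l w) • v
  left_inv w := by simp [hv]
  right_inv w := by simp [hv]

/-- If the functional `l` exposes the point `p` of the compact set `M`, some shear along `v`
pulls out of `M` a thin finger along the segment from `p` to `p + v`. -/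
lemma exists_shear {M : Set E} (hM : IsCompact M) {p : E} (hp : p ∈ M) {l : E →L[ℂ] ℂ} {c : ℂ}
    {v : E} (hv : l v = 0) (hc : l p ≠ c) (hexp : ∀ w ∈ M, w ≠ p → ‖l p - c‖ < ‖l w - c‖)
    {η : ℝ} (hη : 0 < η) :
    ∃ ψ : E ≃ E, DifferentiableOn ℂ ψ {w | l w ≠ c} ∧ DifferentiableOn ℂ ψ.symm {w | l w ≠ c} ∧
      (∀ w, l (ψ w) = l w) ∧ ψ p = p + v ∧
      (∀ w ∈ M, ψ w ∈ thickening η (M ∪ segment ℝ p (p + v))) ∧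
      (∀ w ∈ M, η ≤ dist w p → ‖ψ w - w‖ < η ∧ ‖ψ.symm w - w‖ < η) := by
  have hpc : l p - c ≠ 0 := sub_ne_zero.2 hc
  have hMc : ∀ w ∈ M, l w - c ≠ 0 := by
    intro w hw
    by_cases h : w = p
    · rwa [h]
    · exact norm_pos_iff.1 ((norm_nonneg _).trans_lt (hexp w hw h))
  set f : E → ℂ := fun w => (l p - c) / (l w - c) with hf
  have hfc : ContinuousOn f M := by
    refine ContinuousOn.div (by fun_prop) (by fun_prop) hMc
  have hf1 : ∀ w ∈ M, w ≠ p → ‖f w‖ < 1 := by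
    intro w hw h
    rw [hf, norm_div, div_lt_one (norm_pos_iff.2 (hMc w hw))]
    exact hexp w hw h
  have hfp : f p = 1 := div_self hpc
  obtain ⟨δ, hδ, hfar⟩ : ∃ δ > 0, ∀ w ∈ M, η / 2 ≤ dist w p → δ ≤ ‖f w - 1‖ := by
    have hcomp : IsCompact (M ∩ {w | η / 2 ≤ dist w p}) :=
      hM.inter_right (isClosed_le continuous_const (by fun_prop))
    rcases (M ∩ {w | η / 2 ≤ dist w p}).eq_empty_or_nonempty with he | hne
    · refine ⟨1, one_pos, fun u hu hd => ?_⟩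
      have : u ∈ M ∩ {w | η / 2 ≤ dist w p} := ⟨hu, hd⟩
      rw [he] at this; exact this.elim
    · obtain ⟨u₀, hu₀, hmin⟩ := hcomp.exists_isMinOn hne
        (((hfc.mono inter_subset_left).sub continuousOn_const).norm)
      refine ⟨‖f u₀ - 1‖, ?_, fun w hw hd => hmin ⟨hw, hd⟩⟩
      rw [gt_iff_lt, norm_pos_iff, sub_ne_zero]
      intro h
      have h2 : η / 2 ≤ dist u₀ p := hu₀.2
      have := hf1 u₀ hu₀.1 (by rintro rfl; rw [dist_self] at h2; linarith)
      rw [h, norm_one] at this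
      exact lt_irrefl _ this
  set ε := η / 2 / (‖v‖ + 1) with hε
  have hεp : 0 < ε := by positivity
  have hεv : ∀ a : ℝ, a < ε → a * ‖v‖ < η / 2 := by
    intro a ha
    have h1 : a * ‖v‖ ≤ ε * ‖v‖ := mul_le_mul_of_nonneg_right ha.le (norm_nonneg _)
    have h2 : ε * (‖v‖ + 1) = η / 2 := by rw [hε]; field_simp
    nlinarith
  obtain ⟨S, hS1, hS, hSfar⟩ := exists_peak_polynomial (hM.image_of_continuousOn hfc) (by
    rintro _ ⟨w, hw, rfl⟩
    by_cases h : w = p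
    · left; rw [h, hfp]
    · right; exact hf1 w hw h) hδ hεp
  set χ : ℂ → ℂ := fun ζ => S.eval ((l p - c) / (ζ - c)) with hχ
  have hχd : DifferentiableOn ℂ (fun w => χ (l w) • v) {w | l w ≠ c} := by
    refine DifferentiableOn.smul_const ?_ _
    refine S.differentiable.comp_differentiableOn ?_
    simp only [div_eq_mul_inv]
    refine ((l.differentiable.differentiableOn.sub_const c).fun_inv ?_).const_mul _
    intro w hw
    exact sub_ne_zero.2 hw
  refine ⟨shear χ l v hv, differentiableOn_id.add hχd, differentiableOn_id.sub hχd,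
    fun w => by simp [shear, hv], ?_, ?_, ?_⟩
  · show p + χ (l p) • v = p + v
    have : χ (l p) = 1 := by simp only [hχ]; rw [div_self hpc, hS1]
    rw [this, one_smul]
  · intro w hw
    rw [mem_thickening_iff]
    by_cases hd : η / 2 ≤ dist w p
    · refine ⟨w, Or.inl hw, ?_⟩
      show dist (w + χ (l w) • v) w < η
      rw [dist_eq_norm, add_sub_cancel_left, norm_smul]
      have := hεv _ (hSfar _ ⟨w, hw, rfl⟩ (hfar w hw hd))
      simp only [hχ]
      linarith
    · obtain ⟨s, hs0, hs1, hs⟩ := hS _ ⟨w, hw, rfl⟩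
      refine ⟨p + s • v, Or.inr ?_, ?_⟩
      · rw [segment_eq_image']
        exact ⟨s, ⟨hs0, hs1⟩, by simp⟩
      · show dist (w + χ (l w) • v) (p + s • v) < η
        rw [dist_eq_norm, ← Complex.coe_smul,
          show w + χ (l w) • v - (p + (s : ℂ) • v) = (w - p) + (χ (l w) - s) • v by module]
        refine (norm_add_le _ _).trans_lt ?_
        rw [norm_smul, ← dist_eq_norm]
        have := hεv _ hs
        simp only [hχ]
        linarith [not_le.1 hd]
  · intro w hw hd
    have := hεv _ (hSfar _ ⟨w, hw, rfl⟩ (hfar w hw (by linarith)))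
    constructor
    · show ‖w + χ (l w) • v - w‖ < η
      rw [add_sub_cancel_left, norm_smul]
      simp only [hχ]; linarith
    · show ‖w - χ (l w) • v - w‖ < η
      rw [sub_sub_cancel_left, norm_neg, norm_smul]
      simp only [hχ]; linarith

/-- `Reaches M p`: the closed unit ball can be mapped, by tame bijections arbitrarily close to the
identity on smaller balls, into arbitrarily small neighbourhoods of `M` so that the image contains
the point `p`. -/
def Reaches (M : Set E) (p : E) : Prop :=
  ∀ r : ℝ, r < 1 → ∀ η : ℝ, 0 < η → ∃ Θ : E ≃ E, IsTame Θ ∧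
    Θ '' closedBall 0 1 ⊆ thickening η M ∧
    (∀ z ∈ closedBall (0 : E) r, ‖Θ z - z‖ < η ∧ ‖Θ.symm z - z‖ < η) ∧
    p ∈ Θ '' closedBall 0 1

lemma reaches_closedBall {p : E} (hp : p ∈ closedBall (0 : E) 1) :
    Reaches (closedBall (0 : E) 1) p := by
  intro r _ η hη
  refine ⟨Equiv.refl E, isTame_refl, ?_, fun z _ => by simpa using hη, by simpa using hp⟩
  simpa using self_subset_thickening hη _

/-- Growing a model set by a segment issuing from an exposed point. -/
lemma Reaches.add_segment {M : Set E} {p : E} (h : Reaches M p) (hM : IsCompact M) (hp : p ∈ M)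
    (hBM : closedBall 0 1 ⊆ M) (hp1 : 1 ≤ ‖p‖) {l : E →L[ℂ] ℂ} (hl : l ≠ 0) {c : ℂ}
    {v : E} (hv : l v = 0) (hc : l p ≠ c) (hexp : ∀ w ∈ M, w ≠ p → ‖l p - c‖ < ‖l w - c‖) :
    Reaches (M ∪ segment ℝ p (p + v)) (p + v) := by
  intro r hr η hη
  set η₁ := min (η / 2) ((1 - r) / 2) with hη₁
  have hη₁p : 0 < η₁ := lt_min (by positivity) (by linarith)
  have hη₁a : η₁ ≤ η / 2 := min_le_left _ _
  have hη₁b : η₁ ≤ (1 - r) / 2 := min_le_right _ _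
  obtain ⟨ψ, hψ, hψs, hlψ, hψp, hψM, hψr⟩ := exists_shear hM hp hv hc hexp hη₁p
  set N : Set E := {w | l w ≠ c} with hN
  have hNo : IsOpen N := isOpen_ne_fun l.continuous continuous_const
  have hMN : M ⊆ N := by
    intro w hw
    by_cases hwp : w = p
    · rw [hwp]; exact hc
    · exact sub_ne_zero.1 (norm_pos_iff.1 ((norm_nonneg _).trans_lt (hexp w hw hwp)))
  -- a neighbourhood of `M` on which the shear still behaves well
  obtain ⟨η₂, hη₂, hη₂sub⟩ : ∃ η₂ > 0, thickening η₂ M ⊆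
      N ∩ ψ ⁻¹' thickening η₁ (M ∪ segment ℝ p (p + v)) :=
    hM.exists_thickening_subset_open
      (hψ.continuousOn.isOpen_inter_preimage hNo isOpen_thickening)
      (fun w hw => ⟨hMN hw, hψM w hw⟩)
  obtain ⟨η₃, hη₃, hη₃c⟩ : ∃ η₃ > 0, ∀ z ∈ M, ∀ y, dist z y < η₃ → dist (ψ z) (ψ y) < η / 2 := by
    have := hM.uniformContinuousAt_of_continuousAt ψ
      (fun w hw => hψ.continuousOn.continuousAt (hNo.mem_nhds (hMN hw)))
      (dist_mem_uniformity (show 0 < η / 2 by positivity))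
    obtain ⟨η₃, hη₃, h3⟩ := Metric.mem_uniformity_dist.1 this
    exact ⟨η₃, hη₃, fun z hz y hy => h3 hy hz⟩
  set η₄ := min (min η₂ η₃) (η / 2) with hη₄
  have hη₄p : 0 < η₄ := lt_min (lt_min hη₂ hη₃) (by positivity)
  obtain ⟨Θ, hΘt, hΘM, hΘr, a, ha, hap⟩ := h ((1 + r) / 2) (by linarith) η₄ hη₄p
  have hΘη₂ : ∀ z ∈ closedBall (0 : E) 1, Θ z ∈ thickening η₂ M := fun z hz =>
    thickening_mono ((min_le_left _ _).trans (min_le_left _ _)) _ (hΘM ⟨z, hz, rfl⟩)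
  refine ⟨Θ.trans ψ, hΘt.trans hl hψ hψs hlψ (fun z hz => (hη₂sub (hΘη₂ z hz)).1), ?_, ?_, ?_⟩
  · rintro _ ⟨z, hz, rfl⟩
    exact thickening_mono (by linarith) _ (hη₂sub (hΘη₂ z hz)).2
  · intro z hz
    rw [mem_closedBall_zero_iff] at hz
    have hzM : z ∈ M := hBM (by rw [mem_closedBall_zero_iff]; linarith)
    have hzp : η₁ ≤ dist z p := by
      rw [dist_comm, dist_eq_norm]
      linarith [norm_sub_norm_le p z]
    obtain ⟨hz1, hz2⟩ := hψr z hzM hzp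
    obtain ⟨hz3, -⟩ := hΘr z (by rw [mem_closedBall_zero_iff]; linarith)
    obtain ⟨-, hz4⟩ := hΘr (ψ.symm z) (by
      rw [mem_closedBall_zero_iff]
      linarith [norm_sub_norm_le (ψ.symm z) z])
    constructor
    · show ‖ψ (Θ z) - z‖ < η
      have h5 := hη₃c z hzM (Θ z) (by
        rw [dist_comm, dist_eq_norm]
        exact hz3.trans_le ((min_le_left _ _).trans (min_le_right _ _)))
      rw [dist_comm, dist_eq_norm] at h5
      have h6 := norm_add_le (ψ (Θ z) - ψ z) (ψ z - z)
      rw [sub_add_sub_cancel] at h6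
      linarith
    · show ‖Θ.symm (ψ.symm z) - z‖ < η
      have h6 := norm_add_le (Θ.symm (ψ.symm z) - ψ.symm z) (ψ.symm z - z)
      rw [sub_add_sub_cancel] at h6
      linarith [min_le_right (min η₂ η₃) (η / 2)]
  · exact ⟨a, ha, by show ψ (Θ a) = p + v; rw [hap, hψp]⟩

end Fingers

/-! ### Generic sets -/

section Trees

variable {E : Type*} [NormedAddCommGroup E] [InnerProductSpace ℂ E]

/-- `S` is generic if, for every point `t` outside `S`, most complex affine hyperplanes
through `t` miss `S`. -/
def Generic (S : Set E) : Prop :=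
  ∀ t ∉ S, Dense {l : E →L[ℂ] ℂ | ∀ w ∈ S, l w ≠ l t}

lemma isOpen_separating {S : Set E} (hS : IsCompact S) (t : E) :
    IsOpen {l : E →L[ℂ] ℂ | ∀ w ∈ S, l w ≠ l t} := by
  rw [isOpen_iff_eventually]
  intro l hl
  refine hS.eventually_forall_of_forall_eventually fun w hw => ?_
  have h1 : ContinuousAt (fun z : (E →L[ℂ] ℂ) × E => z.1 z.2) (l, w) := by fun_prop
  have h2 : ContinuousAt (fun z : (E →L[ℂ] ℂ) × E => z.1 t) (l, w) := by fun_prop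
  have h3 := (h1.sub h2).eventually_ne (sub_ne_zero.2 (hl w hw))
  filter_upwards [h3] with z hz
  exact sub_ne_zero.1 hz

lemma generic_empty : Generic (∅ : Set E) := by
  intro t _
  simp

lemma Generic.union {S S' : Set E} (hS : IsCompact S) (h : Generic S)
    (h' : Generic S') : Generic (S ∪ S') := by
  intro t ht
  rw [mem_union, not_or] at ht
  refine ((h t ht.1).inter_of_isOpen_left (h' t ht.2) (isOpen_separating hS t)).mono ?_
  rintro l ⟨h1, h2⟩ w (hw | hw)
  · exact h1 w hw
  · exact h2 w hw

lemma isCompact_segment' (x y : E) : IsCompact (segment ℝ x y) := by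
  rw [segment_eq_image']
  exact isCompact_Icc.image (by fun_prop)

/-- The functionals `l₀ + τ • μ` taking the value of `t` on the segment correspond to `τ` on a
smooth arc in `ℂ`, if `μ` separates `t` from the segment. -/
lemma generic_segment (x y : E) : Generic (segment ℝ x y) := by
  intro t ht
  obtain ⟨μ, u, hμ, hμt⟩ := RCLike.geometric_hahn_banach_closed_point (𝕜 := ℂ)
    (convex_segment x y) (isCompact_segment' x y).isClosed ht
  have hne : ∀ w ∈ segment ℝ x y, μ w - μ t ≠ 0 := by
    intro w hw h
    have := hμ w hw
    rw [sub_eq_zero.1 h] at this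
    linarith
  rw [Metric.dense_iff]
  intro l₀ ε hε
  set f : ℝ → ℂ := fun s => -(l₀ (x + s • (y - x)) - l₀ t) / (μ (x + s • (y - x)) - μ t) with hf
  have hfd : ContDiffOn ℝ 1 f (Icc 0 1) := by
    have hl : ∀ l : E →L[ℂ] ℂ, ContDiff ℝ 1 (fun s : ℝ => l (x + s • (y - x)) - l t) := by
      intro l
      have : ContDiff ℝ 1 (fun z => l z) := (l.restrictScalars ℝ).contDiff
      exact (this.comp (by fun_prop)).sub contDiff_const
    simp only [hf, div_eq_mul_inv]
    refine (hl l₀).neg.contDiffOn.mul ((hl μ).contDiffOn.inv ?_)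
    intro s hs
    exact hne _ (by rw [segment_eq_image']; exact ⟨s, hs, rfl⟩)
  have hd : Dense (f '' Icc 0 1)ᶜ := by
    refine hfd.dense_compl_image_of_dimH_lt_finrank (convex_Icc 0 1) le_rfl ?_
    refine (dimH_mono (subset_univ _)).trans_lt ?_
    rw [Real.dimH_univ, Complex.finrank_real_complex]
    norm_num
  obtain ⟨τ, hτ, hτ'⟩ := Metric.dense_iff.1 hd 0 (ε / (‖μ‖ + 1)) (by positivity)
  rw [mem_ball_zero_iff, lt_div_iff₀ (by positivity)] at hτ
  refine ⟨l₀ + τ • μ, ?_, fun w hw h => hτ' ?_⟩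
  · rw [mem_ball, dist_eq_norm, add_sub_cancel_left, norm_smul]
    nlinarith [norm_nonneg τ, norm_nonneg μ]
  · have hw' := hw
    rw [segment_eq_image'] at hw
    obtain ⟨s, hs, rfl⟩ := hw
    refine ⟨s, hs, ?_⟩
    rw [hf]
    simp only
    rw [div_eq_iff (hne _ hw')]
    simp only [add_apply, smul_apply, smul_eq_mul] at h
    linear_combination -h

variable [FiniteDimensional ℂ E]

lemma exists_ne_zero_inner_eq_zero (hE : 2 ≤ Module.finrank ℂ E) (u : E) :
    ∃ v : E, v ≠ 0 ∧ inner ℂ u v = 0 := by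
  have := LinearMap.ker_ne_bot_of_finrank_lt (f := (innerSL ℂ u : E →L[ℂ] ℂ).toLinearMap)
    (by rw [Module.finrank_self]; omega)
  obtain ⟨v, hv, hv0⟩ := (Submodule.ne_bot_iff _).1 this
  exact ⟨v, hv0, by simpa using hv⟩

lemma dense_compl_segment (hE : 2 ≤ Module.finrank ℂ E) (x y : E) :
    Dense (segment ℝ x y)ᶜ := by
  obtain ⟨v, hv0, hv⟩ := exists_ne_zero_inner_eq_zero hE (y - x)
  have hl : (innerSL ℂ v : E →L[ℂ] ℂ) ≠ 0 := by
    intro h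
    have : (innerSL ℂ v : E →L[ℂ] ℂ) v = 0 := by rw [h]; simp
    simp [hv0] at this
  refine (dense_hyperplane_compl hl (innerSL ℂ v x)).mono ?_
  intro w hw hws
  apply hw
  rw [segment_eq_image'] at hws
  obtain ⟨s, -, rfl⟩ := hws
  have h0 : inner ℂ v (y - x) = 0 := by rw [← inner_conj_symm, hv]; simp
  simp only [innerSL_apply_apply]
  rw [inner_add_right, ← Complex.coe_smul, inner_smul_right, h0]
  simp

end Trees

/-! ### Growing a tree from the ball -/

section Grow

variable {E : Type*} [NormedAddCommGroup E] [InnerProductSpace ℂ E]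

/-- A stage in the growth of a tree inside `C`: the unit ball with a generic compact set `S` and
a last segment from `x` to `t` attached, such that the ball can be stretched to reach `t`. -/
structure Grown (C S : Set E) (x t : E) : Prop where
  ne : x ≠ t
  isCompact : IsCompact S
  generic : Generic S
  dense : Dense Sᶜ
  notMem : t ∉ S
  subset : closedBall 0 1 ∪ S ∪ segment ℝ x t ⊆ C
  norm : 1 < ‖t‖
  reaches : Reaches (closedBall 0 1 ∪ S ∪ segment ℝ x t) t

lemma ne_of_norm_lt {l : E →L[ℂ] ℂ} {p : E} (h : ‖l‖ < ‖l p‖) :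
    ∀ w ∈ closedBall (0 : E) 1, l w ≠ l p := by
  intro w hw h'
  rw [mem_closedBall_zero_iff] at hw
  rw [← h'] at h
  nlinarith [l.le_opNorm w, norm_nonneg l]

variable [FiniteDimensional ℂ E]

/-- Attaching one more segment, inside a hyperplane which misses the rest of the tree. -/
lemma Grown.step (hE : 2 ≤ Module.finrank ℂ E) {C S : Set E} {x t : E} (h : Grown C S x t)
    {l : E →L[ℂ] ℂ} (hB : ∀ w ∈ closedBall (0 : E) 1, l w ≠ l t) (hS : ∀ w ∈ S, l w ≠ l t)
    (hx : l x ≠ l t) {v : E} (hv0 : v ≠ 0) (hv : l v = 0) (hC : segment ℝ t (t + v) ⊆ C) :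
    Grown C (S ∪ segment ℝ x t) t (t + v) := by
  have : ProperSpace E := FiniteDimensional.proper ℂ E
  set d := l t - l x with hd
  have hd0 : d ≠ 0 := sub_ne_zero.2 hx.symm
  have hdn : 0 < ‖d‖ := norm_pos_iff.2 hd0
  have hseg : ∀ w ∈ segment ℝ x t, ∃ s : ℝ, s ≤ 1 ∧ l w = l t - (1 - s : ℝ) * d ∧
      (w ≠ t → s < 1) := by
    intro w hw
    rw [segment_eq_image'] at hw
    obtain ⟨s, hs, rfl⟩ := hw
    refine ⟨s, hs.2, ?_, ?_⟩
    · simp only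
      rw [← Complex.coe_smul, map_add, map_smul, map_sub, hd, smul_eq_mul]
      push_cast; ring
    · intro hne
      refine lt_of_le_of_ne hs.2 ?_
      rintro rfl
      simp at hne
  have hltv : l (t + v) = l t := by rw [map_add, hv, add_zero]
  have hcomp : IsCompact (closedBall (0 : E) 1 ∪ S) := (isCompact_closedBall _ _).union h.isCompact
  obtain ⟨δ, hδ, hδ'⟩ : ∃ δ > 0, ∀ w ∈ closedBall (0 : E) 1 ∪ S, δ ≤ ‖l w - l t‖ := by
    obtain ⟨u₀, hu₀, hmin⟩ := hcomp.exists_isMinOn ⟨0, Or.inl (by simp)⟩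
      (f := fun w => ‖l w - l t‖) (by fun_prop)
    refine ⟨‖l u₀ - l t‖, ?_, fun w hw => hmin hw⟩
    rw [gt_iff_lt, norm_pos_iff, sub_ne_zero]
    rcases hu₀ with h' | h'
    · exact hB _ h'
    · exact hS _ h'
  obtain ⟨κ, hκ, hκd⟩ : ∃ κ : ℝ, 0 < κ ∧ 2 * κ * ‖d‖ < δ := by
    refine ⟨δ / (4 * ‖d‖), by positivity, ?_⟩
    field_simp
    linarith
  have hκn : ‖l t - (l t + (κ : ℂ) * d)‖ = κ * ‖d‖ := by
    rw [sub_add_cancel_left, norm_neg, norm_mul, Complex.norm_real, Real.norm_of_nonneg hκ.le]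
  have hR := h.reaches.add_segment (l := l) (c := l t + (κ : ℂ) * d) (v := v)
    (hcomp.union (isCompact_segment' x t)) (Or.inr (right_mem_segment ℝ x t))
    (fun z hz => Or.inl (Or.inl hz)) h.norm.le (by rintro rfl; simp at hx) hv
    (by
      intro h'
      rw [← h', sub_self, norm_zero] at hκn
      exact absurd hκn (by positivity))
    (by
      rw [hκn]
      rintro w (hw | hw) hwt
      · have h1 := norm_sub_norm_le (l w - l t) ((κ : ℂ) * d)
        rw [norm_mul, Complex.norm_real, Real.norm_of_nonneg hκ.le, sub_sub] at h1
        linarith [hδ' w hw]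
      · obtain ⟨s, hs1, hs, hst⟩ := hseg w hw
        rw [hs, show l t - ((1 - s : ℝ) : ℂ) * d - (l t + (κ : ℂ) * d)
          = -(((1 - s + κ : ℝ) : ℂ) * d) by push_cast; ring, norm_neg, norm_mul,
          Complex.norm_real, Real.norm_of_nonneg (by linarith)]
        nlinarith [hst hwt])
  refine ⟨by simpa using hv0, h.isCompact.union (isCompact_segment' x t),
    h.generic.union h.isCompact (generic_segment x t), ?_, ?_, ?_, ?_, ?_⟩
  · rw [compl_union]
    exact h.dense.inter_of_isOpen_left (dense_compl_segment hE x t)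
      h.isCompact.isClosed.isOpen_compl
  · rintro (h' | h')
    · exact hS _ h' hltv
    · obtain ⟨s, hs1, hs, hst⟩ := hseg _ h'
      have := hst (by simpa using hv0)
      rw [hltv, eq_comm, sub_eq_self] at hs
      have h2 : (1 - s : ℝ) ≠ 0 := by linarith
      rcases mul_eq_zero.1 hs with h3 | h3
      · exact h2 (by exact_mod_cast h3)
      · exact hd0 h3
  · rw [← union_assoc]
    exact union_subset h.subset hC
  · by_contra h'
    exact hB (t + v) (by rw [mem_closedBall_zero_iff]; exact not_lt.1 h') hltv
  · rwa [← union_assoc]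

/-- The points just outside the ball are reached by one segment, tangent to the sphere. -/
lemma exists_grown_near_ball (hE : 2 ≤ Module.finrank ℂ E) {C : Set E} {ς : ℝ}
    (hC : ball (0 : E) (1 + ς) ⊆ C) {t : E} (ht : 1 < ‖t‖) (ht' : ‖t‖ < 1 + ς) :
    ∃ S x, Grown C S x t := by
  have : ProperSpace E := FiniteDimensional.proper ℂ E
  obtain ⟨e, he0, het⟩ := exists_ne_zero_inner_eq_zero hE t
  have hen : ‖e‖ ≠ 0 := norm_ne_zero_iff.2 he0
  have htn : (0 : ℝ) < ‖t‖ ^ 2 := by positivity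
  set b : ℝ := Real.sqrt (1 - 1 / ‖t‖ ^ 2) / ‖e‖ with hb
  have hb2 : b ^ 2 * ‖e‖ ^ 2 = 1 - 1 / ‖t‖ ^ 2 := by
    rw [hb, div_pow, Real.sq_sqrt, div_mul_cancel₀ _ (by positivity)]
    rw [sub_nonneg, div_le_one htn]
    nlinarith
  set x : E := ((1 / ‖t‖ ^ 2 : ℝ) : ℂ) • t + (b : ℂ) • e with hx
  have het' : inner ℂ e t = 0 := by rw [← inner_conj_symm, het]; simp
  have htt : inner ℂ t t = ((‖t‖ ^ 2 : ℝ) : ℂ) := by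
    rw [inner_self_eq_norm_sq_to_K]; push_cast; rfl
  have hee : inner ℂ e e = ((‖e‖ ^ 2 : ℝ) : ℂ) := by
    rw [inner_self_eq_norm_sq_to_K]; push_cast; rfl
  have hxt : inner ℂ x t = 1 := by
    rw [hx, inner_add_left, inner_smul_left, inner_smul_left, het', htt, mul_zero, add_zero,
      Complex.conj_ofReal, ← Complex.ofReal_mul, one_div_mul_cancel htn.ne', Complex.ofReal_one]
  have hxx : inner ℂ x x = 1 := by
    conv_lhs => rw [hx]
    simp only [inner_add_left, inner_add_right, inner_smul_left, inner_smul_right, het', htt, het,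
      hee, Complex.conj_ofReal]
    simp only [mul_zero, add_zero, zero_add]
    norm_cast
    rw [← mul_assoc (b : ℝ) b, ← pow_two b, hb2]
    field_simp
    ring
  have hxn : ‖x‖ = 1 := by
    have h := inner_self_eq_norm_sq_to_K (𝕜 := ℂ) x
    rw [hxx] at h
    have h2 : ‖x‖ ^ 2 = 1 := by
      apply Complex.ofReal_injective
      rw [Complex.ofReal_pow, Complex.ofReal_one]
      exact h.symm
    nlinarith [norm_nonneg x]
  have hR := (reaches_closedBall (p := x) (by rw [mem_closedBall_zero_iff, hxn])).add_segment
    (l := innerSL ℂ x) (c := 2) (v := t - x) (isCompact_closedBall _ _)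
    (by rw [mem_closedBall_zero_iff, hxn]) le_rfl hxn.ge
    (by
      intro h
      have : (innerSL ℂ x : E →L[ℂ] ℂ) x = 0 := by rw [h]; simp
      rw [innerSL_apply_apply, hxx] at this
      exact one_ne_zero this)
    (by rw [map_sub, innerSL_apply_apply, innerSL_apply_apply, hxx, hxt, sub_self])
    (by rw [innerSL_apply_apply, hxx]; norm_num)
    (by
      intro w hw hwx
      rw [mem_closedBall_zero_iff] at hw
      rw [innerSL_apply_apply, innerSL_apply_apply, hxx]
      have h1 : (inner ℂ x w).re < 1 := by
        have h2 := norm_sub_sq (𝕜 := ℂ) x w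
        have h3 : 0 < ‖x - w‖ := norm_pos_iff.2 (sub_ne_zero.2 (Ne.symm hwx))
        rw [hxn] at h2
        have h4 : RCLike.re (inner ℂ x w) = (inner ℂ x w).re := rfl
        rw [h4] at h2
        nlinarith [norm_nonneg w]
      have h5 := Complex.abs_re_le_norm (inner ℂ x w - 2)
      have h6 := neg_abs_le ((inner ℂ x w - 2).re)
      simp only [Complex.sub_re, Complex.re_ofNat] at h5 h6
      have : ‖(1 - 2 : ℂ)‖ = 1 := by norm_num
      rw [this]
      linarith)
  rw [add_sub_cancel] at hR
  refine ⟨∅, x, ?_, isCompact_empty, generic_empty, by simp, by simp, ?_, ht, ?_⟩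
  · intro h
    rw [h] at hxn
    linarith
  · rw [union_empty]
    refine (union_subset (closedBall_subset_ball (by linarith)) ?_).trans hC
    refine (convex_ball (0 : E) (1 + ς)).segment_subset ?_ ?_
    · rw [mem_ball_zero_iff, hxn]; linarith
    · rwa [mem_ball_zero_iff]
  · rwa [union_empty]

/-- Near a limit of reached points, two more segments reach every nearby point off the tree. -/
lemma closure_grown_mem_nhds (hE : 2 ≤ Module.finrank ℂ E) {C : Set E} (hC : IsOpen C) {q : E}
    (hqC : q ∈ C) (hq : 1 < ‖q‖) (hqA : q ∈ closure {t | ∃ S x, Grown C S x t}) :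
    closure {t | ∃ S x, Grown C S x t} ∈ 𝓝 q := by
  obtain ⟨R, hR, hRC⟩ := Metric.isOpen_iff.1 hC q hqC
  obtain ⟨v₀, hv₀, hqv⟩ := exists_ne_zero_inner_eq_zero hE q
  have hvq : inner ℂ v₀ q = 0 := by rw [← inner_conj_symm, hqv]; simp
  have hv₀n : 0 < ‖v₀‖ := norm_pos_iff.2 hv₀
  obtain ⟨ε, hε, hεq⟩ : ∃ ε : ℝ, 0 < ε ∧ ‖q‖ + ε * ‖v₀‖ < ‖q‖ ^ 2 := by
    refine ⟨(‖q‖ ^ 2 - ‖q‖) / (2 * ‖v₀‖), ?_, ?_⟩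
    · apply div_pos <;> nlinarith
    · rw [div_mul_eq_mul_div, mul_div_mul_right _ _ hv₀n.ne']
      nlinarith
  set l₀ : E →L[ℂ] ℂ := innerSL ℂ q with hl₀
  set l₁ : E →L[ℂ] ℂ := l₀ + (ε : ℂ) • innerSL ℂ v₀ with hl₁
  have hl₀q : l₀ q = ((‖q‖ ^ 2 : ℝ) : ℂ) := by
    rw [hl₀, innerSL_apply_apply, inner_self_eq_norm_sq_to_K]; push_cast; rfl
  have hl₁q : l₁ q = ((‖q‖ ^ 2 : ℝ) : ℂ) := by
    rw [hl₁, add_apply, smul_apply, innerSL_apply_apply ℂ v₀, hvq, smul_zero, add_zero, hl₀q]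
  have hn₀ : ‖l₀‖ < ‖l₀ q‖ := by
    rw [hl₀q, Complex.norm_real, Real.norm_of_nonneg (by positivity), hl₀, innerSL_apply_norm]
    nlinarith
  have hn₁ : ‖l₁‖ < ‖l₁ q‖ := by
    rw [hl₁q, Complex.norm_real, Real.norm_of_nonneg (by positivity)]
    refine lt_of_le_of_lt ((norm_add_le _ _).trans ?_) hεq
    rw [norm_smul, hl₀, innerSL_apply_norm, innerSL_apply_norm, Complex.norm_real,
      Real.norm_of_nonneg hε.le]
  have hl₀v : l₀ v₀ = 0 := by rw [hl₀, innerSL_apply_apply, hqv]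
  have hl₀q0 : l₀ q ≠ 0 := norm_pos_iff.1 ((norm_nonneg _).trans_lt hn₀)
  have hl₁v : l₁ v₀ ≠ 0 := by
    rw [hl₁, add_apply, hl₀v, zero_add, smul_apply, innerSL_apply_apply, smul_eq_mul]
    refine mul_ne_zero (by exact_mod_cast hε.ne') ?_
    simpa using hv₀
  -- the direction of the first segment, and the segment itself
  set n : (E →L[ℂ] ℂ) → E := fun l => v₀ - (l v₀ / l q) • q with hn
  set V : (E →L[ℂ] ℂ) × (E →L[ℂ] ℂ) × E × E → E :=
    fun z => (z.2.1 (z.2.2.2 - z.2.2.1) / z.2.1 (n z.1)) • n z.1 with hV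
  set z₀ : (E →L[ℂ] ℂ) × (E →L[ℂ] ℂ) × E × E := (l₀, l₁, q, q) with hz₀
  have hnl₀ : n l₀ = v₀ := by simp [hn, hl₀v]
  have hnc : ContinuousAt n l₀ := by
    have h1 : ContinuousAt (fun l : E →L[ℂ] ℂ => l v₀ / l q) l₀ :=
      ContinuousAt.div (by fun_prop) (by fun_prop) hl₀q0
    exact continuousAt_const.sub (h1.smul continuousAt_const)
  have hnc' : ContinuousAt (fun z : (E →L[ℂ] ℂ) × (E →L[ℂ] ℂ) × E × E => n z.1) z₀ :=
    ContinuousAt.comp (g := n) hnc continuousAt_fst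
  have hl₁n : ContinuousAt
      (fun z : (E →L[ℂ] ℂ) × (E →L[ℂ] ℂ) × E × E => z.2.1 (n z.1)) z₀ :=
    ContinuousAt.clm_apply (by fun_prop) hnc'
  have hl₁n0 : z₀.2.1 (n z₀.1) ≠ 0 := by simp only [hz₀, hnl₀]; exact hl₁v
  have hVc : ContinuousAt V z₀ := by
    refine ContinuousAt.smul (ContinuousAt.div (by fun_prop) hl₁n hl₁n0) hnc'
  have hV0 : V z₀ = 0 := by simp [hV, hz₀]
  have ev1 : ∀ᶠ z in 𝓝 z₀, z.2.1 (n z.1) ≠ 0 := hl₁n.eventually_ne hl₁n0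
  have ev2 : ∀ᶠ z in 𝓝 z₀, z.1 q ≠ 0 :=
    ContinuousAt.eventually_ne (by fun_prop) hl₀q0
  have ev3 : ∀ᶠ z in 𝓝 z₀, z.2.2.1 ∈ ball q R :=
    (by fun_prop : ContinuousAt (fun z : (E →L[ℂ] ℂ) × (E →L[ℂ] ℂ) × E × E => z.2.2.1)
      z₀).eventually_mem (ball_mem_nhds q hR)
  have ev4 : ∀ᶠ z in 𝓝 z₀, z.2.2.2 ∈ ball q R :=
    (by fun_prop : ContinuousAt (fun z : (E →L[ℂ] ℂ) × (E →L[ℂ] ℂ) × E × E => z.2.2.2)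
      z₀).eventually_mem (ball_mem_nhds q hR)
  have ev5 : ∀ᶠ z in 𝓝 z₀, z.2.2.1 + V z ∈ ball q R := by
    refine (ContinuousAt.add (by fun_prop) hVc :
      ContinuousAt (fun z => z.2.2.1 + V z) z₀).eventually_mem ?_
    show ball q R ∈ 𝓝 (z₀.2.2.1 + V z₀)
    rw [hV0, add_zero]
    exact ball_mem_nhds q hR
  have ev6 : ∀ᶠ z in 𝓝 z₀, ‖z.1‖ < ‖z.1 z.2.2.1‖ :=
    ContinuousAt.eventually_lt (by fun_prop) (by fun_prop) hn₀
  have ev7 : ∀ᶠ z in 𝓝 z₀, ‖z.2.1‖ < ‖z.2.1 z.2.2.2‖ :=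
    ContinuousAt.eventually_lt (by fun_prop) (by fun_prop) hn₁
  have ev := ev1.and (ev2.and (ev3.and (ev4.and (ev5.and (ev6.and ev7)))))
  rw [hz₀, nhds_prod_eq, nhds_prod_eq, nhds_prod_eq] at ev
  obtain ⟨W₀, hW₀, Z, hZ, hWZ⟩ := mem_prod_iff.1 ev
  obtain ⟨W₁, hW₁, Z', hZ', hWZ'⟩ := mem_prod_iff.1 hZ
  obtain ⟨P, hP, T, hT, hPT⟩ := mem_prod_iff.1 hZ'
  obtain ⟨T', hT'T, hT'o, hqT'⟩ := _root_.mem_nhds_iff.1 hT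
  obtain ⟨p, hpP, S, x, hp⟩ := mem_closure_iff_nhds.1 hqA P hP
  refine mem_of_superset (hT'o.mem_nhds hqT') ?_
  have hdense : Dense (S ∪ segment ℝ x p)ᶜ := by
    rw [compl_union]
    exact hp.dense.inter_of_isOpen_left (dense_compl_segment hE x p)
      hp.isCompact.isClosed.isOpen_compl
  refine (hdense.open_subset_closure_inter hT'o).trans (closure_mono ?_)
  rintro t ⟨htT', htS⟩
  obtain ⟨l', hl'W, hl'⟩ := mem_closure_iff_nhds.1
    ((hp.generic.union hp.isCompact (generic_segment x p)) t htS l₁) W₁ hW₁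
  have hxS : p ∉ S ∪ segment ℝ x x := by
    rw [segment_same]
    rintro (h | h)
    · exact hp.notMem h
    · exact hp.ne h.symm
  obtain ⟨l, hlW, hl⟩ := mem_closure_iff_nhds.1
    ((hp.generic.union hp.isCompact (generic_segment x x)) p hxS l₀) W₀ hW₀
  have hall := hWZ (show (l, l', p, t) ∈ W₀ ×ˢ Z from
    ⟨hlW, hWZ' ⟨hl'W, hPT ⟨hpP, hT'T htT'⟩⟩⟩)
  simp only [mem_ofPred_eq] at hall
  obtain ⟨h1, h2, h3, h4, h5, h6, h7⟩ := hall
  set v := V (l, l', p, t) with hv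
  have hlv : l v = 0 := by
    simp only [hv, hV, hn, map_smul, map_sub, smul_eq_mul]
    rw [div_mul_cancel₀ _ h2, sub_self, mul_zero]
  have hl'v : l' (p + v) = l' t := by
    rw [map_add, hv]
    simp only [hV, map_smul, smul_eq_mul]
    rw [div_mul_cancel₀ _ h1, map_sub, add_sub_cancel]
  have hv0 : v ≠ 0 := by
    intro h
    rw [h, add_zero] at hl'v
    exact hl' p (Or.inr (right_mem_segment ℝ x p)) hl'v
  have g1 := hp.step hE (ne_of_norm_lt h6) (fun w hw => hl w (Or.inl hw))
    (hl x (Or.inr (left_mem_segment ℝ x x))) hv0 hlv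
    (((convex_ball q R).segment_subset h3 h5).trans hRC)
  by_cases htp : t - (p + v) = 0
  · rw [sub_eq_zero] at htp
    exact ⟨_, _, htp ▸ g1⟩
  have g2 := g1.step hE (l := l') (by rw [hl'v]; exact ne_of_norm_lt h7) (by rwa [hl'v])
    (by rw [hl'v]; exact hl' p (Or.inr (right_mem_segment ℝ x p))) htp
    (by rw [map_sub, hl'v, sub_self])
    (by rw [add_sub_cancel]; exact ((convex_ball q R).segment_subset h5 h4).trans hRC)
  rw [add_sub_cancel] at g2
  exact ⟨_, _, g2⟩

lemma subset_closure_grown (hE : 2 ≤ Module.finrank ℂ E) {C : Set E} (hC : IsOpen C)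
    (hCc : IsPreconnected C) (hBC : closedBall 0 1 ⊆ C) :
    C ⊆ closure {t | ∃ S x, Grown C S x t} ∪ closedBall 0 1 := by
  have : ProperSpace E := FiniteDimensional.proper ℂ E
  obtain ⟨ς, hς, hςC⟩ := (isCompact_closedBall (0 : E) 1).exists_thickening_subset_open hC hBC
  rw [thickening_closedBall hς zero_le_one, add_comm] at hςC
  set A := {t | ∃ S x, Grown C S x t} with hA
  have hcl : IsClosed (closure A ∪ closedBall 0 1) := isClosed_closure.union isClosed_closedBall
  have hball : ball (0 : E) (1 + ς) ⊆ closure A ∪ closedBall 0 1 := by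
    intro t ht
    rw [mem_ball_zero_iff] at ht
    by_cases h : 1 < ‖t‖
    · exact Or.inl (subset_closure (exists_grown_near_ball hE hςC h ht))
    · exact Or.inr (by rw [mem_closedBall_zero_iff]; exact not_lt.1 h)
  have hnear : ∀ q, ‖q‖ ≤ 1 → q ∈ interior (closure A ∪ closedBall 0 1) := fun q hq =>
    mem_interior.2 ⟨_, hball, isOpen_ball, by rw [mem_ball_zero_iff]; linarith⟩
  refine (hCc.subset_of_closure_inter_subset isOpen_interior
    ⟨0, hBC (by simp), hnear 0 (by simp)⟩ ?_).trans interior_subset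
  rintro q ⟨hq, hqC⟩
  by_cases h : 1 < ‖q‖
  · rcases closure_minimal interior_subset hcl hq with h' | h'
    · exact mem_interior_iff_mem_nhds.2 (mem_of_superset
        (closure_grown_mem_nhds hE hC hqC h h') subset_union_left)
    · rw [mem_closedBall_zero_iff] at h'; linarith
  · exact hnear q (not_lt.1 h)

/-- Inside a domain `C` containing the closed ball, the ball can be stretched towards any point of
`C`, with little change on a given smaller ball. -/
lemma exists_tame_near (hE : 2 ≤ Module.finrank ℂ E) {C : Set E} (hC : IsOpen C)
    (hCc : IsPreconnected C) (hBC : closedBall 0 1 ⊆ C) {q : E} (hq : q ∈ C) {r η : ℝ}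
    (hr : r < 1) (hη : 0 < η) :
    ∃ Θ : E ≃ E, IsTame Θ ∧ Θ '' closedBall 0 1 ⊆ C ∧
      (∀ z ∈ closedBall (0 : E) r, ‖Θ z - z‖ < η ∧ ‖Θ.symm z - z‖ < η) ∧
      ∃ a ∈ ball (0 : E) 1, ‖Θ a - q‖ < η := by
  have : ProperSpace E := FiniteDimensional.proper ℂ E
  have hcb : closure (ball (0 : E) 1) = closedBall 0 1 := closure_ball _ one_ne_zero
  rcases subset_closure_grown hE hC hCc hBC hq with h | h
  · obtain ⟨t, ⟨S, x, ht⟩, htq⟩ := Metric.mem_closure_iff.1 h (η / 2) (by positivity)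
    have hM : IsCompact (closedBall 0 1 ∪ S ∪ segment ℝ x t) :=
      ((isCompact_closedBall _ _).union ht.isCompact).union (isCompact_segment' x t)
    obtain ⟨η₁, hη₁, hsub⟩ := hM.exists_thickening_subset_open hC ht.subset
    obtain ⟨Θ, hΘ, hΘM, hΘr, a, ha, hat⟩ := ht.reaches r hr (min η η₁) (lt_min hη hη₁)
    have hΘC : Θ '' closedBall 0 1 ⊆ C :=
      hΘM.trans ((thickening_mono (min_le_right _ _) _).trans hsub)
    refine ⟨Θ, hΘ, hΘC, fun z hz => ⟨(hΘr z hz).1.trans_le (min_le_left _ _),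
      (hΘr z hz).2.trans_le (min_le_left _ _)⟩, ?_⟩
    obtain ⟨C', hC'o, -, hBC', hd, -⟩ := hΘ C hC hCc hΘC
    have hcont : ContinuousAt Θ a := hd.continuousOn.continuousAt (hC'o.mem_nhds (hBC' ha))
    rw [← hcb] at ha
    obtain ⟨_, ⟨a', ha', rfl⟩, h'⟩ :=
      Metric.mem_closure_iff.1 (mem_closure_image hcont ha) (η / 2) (by positivity)
    refine ⟨a', ha', ?_⟩
    rw [← dist_eq_norm]
    rw [hat] at h'
    have := dist_triangle (Θ a') t q
    rw [dist_comm] at h' htq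
    linarith
  · rw [← hcb] at h
    obtain ⟨a, ha, haq⟩ := Metric.mem_closure_iff.1 h η hη
    refine ⟨Equiv.refl E, isTame_refl, by simpa using hBC, fun z _ => by simpa using hη,
      a, ha, ?_⟩
    rw [← dist_eq_norm, dist_comm]
    exact haq

end Grow

/-! ### Dense balls in convex sets -/

section DenseBall

variable {E : Type*} [NormedAddCommGroup E] [NormedSpace ℂ E]

/-- `Q` contains an open dense subset biholomorphic to the unit ball. -/
def HasDenseBall (Q : Set E) : Prop :=
  ∃ g h : E → E, DifferentiableOn ℂ g (ball 0 1) ∧ g '' ball 0 1 ⊆ Q ∧ IsOpen (g '' ball 0 1) ∧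
    Q ⊆ closure (g '' ball 0 1) ∧ DifferentiableOn ℂ h (g '' ball 0 1) ∧
    ∀ z ∈ ball (0 : E) 1, h (g z) = z

/-- The bijection `g` maps some domain `D` containing the closed unit ball biholomorphically onto
an open dense subset of `Q`. -/
def Spreads (Q : Set E) (g : E ≃ E) : Prop :=
  ∃ D : Set E, IsOpen D ∧ IsPreconnected D ∧ closedBall 0 1 ⊆ D ∧ DifferentiableOn ℂ g D ∧
    g '' D ⊆ Q ∧ IsOpen (g '' D) ∧ Q ⊆ closure (g '' D) ∧ DifferentiableOn ℂ g.symm (g '' D)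

lemma exists_spreads {Q : Set E} (hQ : IsOpen Q) (hQc : Convex ℝ Q) (hne : Q.Nonempty) :
    ∃ g : E ≃ E, Spreads Q g := by
  obtain ⟨x, hx⟩ := hne
  obtain ⟨ε, hε, hεQ⟩ := Metric.isOpen_iff.1 hQ x hx
  have hε2 : ((ε / 2 : ℝ) : ℂ) ≠ 0 := by exact_mod_cast (by positivity : ε / 2 ≠ 0)
  let g : E ≃ E :=
    { toFun := fun z => x + ((ε / 2 : ℝ) : ℂ) • z
      invFun := fun w => ((ε / 2 : ℝ) : ℂ)⁻¹ • (w - x)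
      left_inv := fun z => by
        simp only [add_sub_cancel_left]; rw [inv_smul_smul₀ hε2]
      right_inv := fun w => by
        simp only; rw [smul_inv_smul₀ hε2, add_sub_cancel] }
  have hg : Differentiable ℂ g :=
    (differentiable_const x).add (differentiable_id.const_smul ((ε / 2 : ℝ) : ℂ))
  have hgs : Differentiable ℂ g.symm := (differentiable_id.sub_const x).const_smul _
  have himg : g '' (g ⁻¹' Q) = Q := g.image_preimage Q
  refine ⟨g, g ⁻¹' Q, hQ.preimage hg.continuous, ?_, ?_, hg.differentiableOn, himg.le,
    by rwa [himg], by rw [himg]; exact subset_closure, hgs.differentiableOn⟩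
  · rw [← g.image_symm_eq_preimage]
    exact hQc.isPreconnected.image _ hgs.continuous.continuousOn
  · intro z hz
    rw [mem_closedBall_zero_iff] at hz
    apply hεQ
    show x + ((ε / 2 : ℝ) : ℂ) • z ∈ ball x ε
    rw [mem_ball, dist_eq_norm, add_sub_cancel_left, norm_smul, Complex.norm_real,
      Real.norm_of_nonneg (by positivity)]
    nlinarith [norm_nonneg z]

end DenseBall

section Recursion

variable {E : Type*} [NormedAddCommGroup E] [InnerProductSpace ℂ E] [FiniteDimensional ℂ E]

lemma Spreads.stretch (hE : 2 ≤ Module.finrank ℂ E) {Q : Set E} {g : E ≃ E} (hg : Spreads Q g)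
    {q : E} (hq : q ∈ Q) {r η : ℝ} (hr : r < 1) (hη : 0 < η) :
    ∃ Θ : E ≃ E, Spreads Q (Θ.trans g) ∧
      (∀ z ∈ closedBall (0 : E) r, ‖g (Θ z) - g z‖ ≤ η ∧ ‖Θ z - z‖ ≤ η ∧ ‖Θ.symm z - z‖ ≤ η) ∧
      ∃ a ∈ ball (0 : E) 1, ‖g (Θ a) - q‖ ≤ η := by
  have : ProperSpace E := FiniteDimensional.proper ℂ E
  obtain ⟨D, hDo, hDc, hBD, hgD, hgQ, hgo, hQcl, hgs⟩ := hg
  obtain ⟨_, ⟨y, hy, rfl⟩, hyq⟩ := Metric.mem_closure_iff.1 (hQcl hq) (η / 2) (by positivity)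
  obtain ⟨δ, hδ, hδy⟩ := Metric.continuousAt_iff.1
    (hgD.continuousOn.continuousAt (hDo.mem_nhds hy)) (η / 2) (by positivity)
  obtain ⟨η₃, hη₃, hη₃c⟩ : ∃ η₃ > 0, ∀ z ∈ closedBall (0 : E) 1, ∀ y, dist z y < η₃ →
      dist (g z) (g y) < η := by
    have := (isCompact_closedBall (0 : E) 1).uniformContinuousAt_of_continuousAt g
      (fun w hw => hgD.continuousOn.continuousAt (hDo.mem_nhds (hBD hw)))
      (dist_mem_uniformity hη)
    obtain ⟨η₃, hη₃, h3⟩ := Metric.mem_uniformity_dist.1 this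
    exact ⟨η₃, hη₃, fun z hz y hy => h3 hy hz⟩
  obtain ⟨Θ, hΘ, hΘD, hΘr, a, ha, hay⟩ := exists_tame_near hE hDo hDc hBD hy hr
    (lt_min hη (lt_min hδ hη₃))
  obtain ⟨C, hCo, hCc, hBC, hd, hsub, ho, hcl, hds⟩ := hΘ D hDo hDc hΘD
  have himg : (Θ.trans g) '' C = g '' D ∩ g.symm ⁻¹' (Θ '' C) := by
    rw [Equiv.coe_trans, image_comp]
    ext w
    constructor
    · rintro ⟨u, hu, rfl⟩
      exact ⟨⟨u, hsub hu, rfl⟩, by simpa using hu⟩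
    · rintro ⟨-, hw⟩
      exact ⟨_, hw, by simp⟩
  refine ⟨Θ, ⟨C, hCo, hCc, hBC, hgD.comp hd fun z hz => hsub ⟨z, hz, rfl⟩, ?_, ?_, ?_, ?_⟩,
    fun z hz => ⟨?_, (hΘr z hz).1.le.trans (min_le_left _ _),
      (hΘr z hz).2.le.trans (min_le_left _ _)⟩, a, ha, ?_⟩
  · rw [himg]; exact inter_subset_left.trans hgQ
  · rw [himg]; exact hgs.continuousOn.isOpen_inter_preimage hgo ho
  · refine hQcl.trans (closure_minimal ?_ isClosed_closure)
    rintro _ ⟨u, hu, rfl⟩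
    rw [Equiv.coe_trans, image_comp]
    exact mem_closure_image (hgD.continuousOn.continuousAt (hDo.mem_nhds hu)) (hcl hu)
  · rw [himg]
    exact hds.comp (hgs.mono inter_subset_left) fun w hw => hw.2
  · rw [mem_closedBall_zero_iff] at hz
    rw [← dist_eq_norm, dist_comm]
    refine (hη₃c z (by rw [mem_closedBall_zero_iff]; linarith) _ ?_).le
    rw [dist_comm, dist_eq_norm]
    exact (hΘr z (by rwa [mem_closedBall_zero_iff])).1.trans_le
      ((min_le_right _ _).trans (min_le_right _ _))
  · have h1 := hδy (x := Θ a) (by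
      rw [dist_eq_norm]
      exact hay.trans_le ((min_le_right _ _).trans (min_le_left _ _)))
    rw [← dist_eq_norm]
    have := dist_triangle (g (Θ a)) (g y) q
    rw [dist_comm] at hyq
    linarith

/-- In dimension at least two, every nonempty open convex set contains a dense open ball, up to
biholomorphism. -/
theorem hasDenseBall_of_two_le_finrank (hE : 2 ≤ Module.finrank ℂ E) {Q : Set E} (hQ : IsOpen Q)
    (hQc : Convex ℝ Q) (hne : Q.Nonempty) : HasDenseBall Q := by
  have : ProperSpace E := FiniteDimensional.proper ℂ E
  obtain ⟨g₀, hg₀⟩ := exists_spreads hQ hQc hne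
  have : Nonempty Q := hne.to_subtype
  set u : ℕ → Q := TopologicalSpace.denseSeq Q with hu
  have hstep : ∀ (n : ℕ) (x : {x : (E ≃ E) × ℝ // Spreads Q x.1 ∧ x.2 < 1}),
      ∃ y : {x : (E ≃ E) × ℝ // Spreads Q x.1 ∧ x.2 < 1},
        x.1.2 ≤ y.1.2 ∧ 1 - (1 / 2 : ℝ) ^ n ≤ y.1.2 ∧
        (∀ z, ‖z‖ ≤ x.1.2 → ‖y.1.1 z - x.1.1 z‖ ≤ (1 / 2 : ℝ) ^ n ∧
          ‖x.1.1.symm (y.1.1 z) - z‖ ≤ (1 / 2 : ℝ) ^ n ∧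
          ‖y.1.1.symm (x.1.1 z) - z‖ ≤ (1 / 2 : ℝ) ^ n) ∧
        ∃ a, ‖a‖ ≤ y.1.2 ∧ ‖y.1.1 a - u n.unpair.1‖ ≤ (1 / 2 : ℝ) ^ n := by
    rintro n ⟨⟨g, r⟩, hg, hr⟩
    obtain ⟨Θ, hΘ, hΘr, a, ha, haq⟩ := hg.stretch hE (u n.unpair.1).2 hr
      (show (0 : ℝ) < (1 / 2) ^ n by positivity)
    rw [mem_ball_zero_iff] at ha
    refine ⟨⟨(Θ.trans g, max r (max ‖a‖ (1 - (1 / 2 : ℝ) ^ n))), hΘ, ?_⟩, le_max_left _ _,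
      (le_max_right _ _).trans (le_max_right _ _), ?_, a,
      (le_max_left _ _).trans (le_max_right _ _), haq⟩
    · refine max_lt hr (max_lt ha ?_)
      have : (0 : ℝ) < (1 / 2) ^ n := by positivity
      linarith
    · intro z hz
      simpa using hΘr z (by rwa [mem_closedBall_zero_iff])
  choose next hn1 hn2 hn3 hn4 using hstep
  let σ : ℕ → {x : (E ≃ E) × ℝ // Spreads Q x.1 ∧ x.2 < 1} :=
    fun n => Nat.rec ⟨(g₀, 0), hg₀, one_pos⟩ (fun n x => next n x) n
  have hσ : ∀ n, σ (n + 1) = next n (σ n) := fun n => rfl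
  choose D hDo hDc hBD hgD hgQ hgo hQcl hgs using fun n => (σ n).2.1
  have hmono : Monotone (fun n => (σ n).1.2) :=
    monotone_nat_of_le_succ fun n => by rw [hσ]; exact hn1 n _
  have hlim : Tendsto (fun n => (σ n).1.2) atTop (𝓝 1) := by
    rw [← tendsto_add_atTop_iff_nat 1]
    refine tendsto_of_tendsto_of_tendsto_of_le_of_le (g := fun n => 1 - (1 / 2 : ℝ) ^ n) ?_
      tendsto_const_nhds (fun n => ?_) (fun n => (σ (n + 1)).2.2.le)
    · have := (tendsto_pow_atTop_nhds_zero_of_lt_one (by norm_num : (0:ℝ) ≤ 1 / 2)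
        (by norm_num)).const_sub 1
      rwa [sub_zero] at this
    · simp only [hσ]; exact hn2 n _
  obtain ⟨G, H, hG, hGo, hH, hHG, hGD, hGn⟩ := exists_limit_biholomorphism
    (fun n => (σ n).1.1) (fun n => (σ n).1.2) D hmono (fun n => (σ n).2.2) hlim
    (fun n z hz => by simp only [hσ]; exact (hn3 n (σ n) z hz).1)
    (fun n z hz => by simp only [hσ]; exact (hn3 n (σ n) z hz).2.1)
    (fun n z hz => by simp only [hσ]; exact (hn3 n (σ n) z hz).2.2) hBD hgD hgo hgs
  refine ⟨G, H, hG, ?_, hGo, ?_, hH, hHG⟩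
  · intro w hw
    obtain ⟨n, hn⟩ := hGD w hw
    exact hgQ n hn
  · intro y hy
    rw [Metric.mem_closure_iff]
    intro ε hε
    obtain ⟨k, hk⟩ := (TopologicalSpace.denseRange_denseSeq Q).exists_dist_lt ⟨y, hy⟩
      (show 0 < ε / 2 by positivity)
    obtain ⟨j, hj⟩ := exists_pow_lt_of_lt_one (show 0 < ε / 4 by positivity)
      (by norm_num : (1 / 2 : ℝ) < 1)
    set n := Nat.pair k j with hn
    have hnj : (1 / 2 : ℝ) ^ n < ε / 4 :=
      (pow_le_pow_of_le_one (by norm_num) (by norm_num) (Nat.right_le_pair k j)).trans_lt hj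
    obtain ⟨a, ha, haq⟩ := hn4 n (σ n)
    rw [← hσ] at ha haq
    have hGa := hGn (n + 1) a ha
    refine ⟨G a, ⟨a, ?_, rfl⟩, ?_⟩
    · rw [mem_ball_zero_iff]; exact ha.trans_lt (σ (n + 1)).2.2
    · have h1 : dist y (u k) < ε / 2 := hk
      have h2 : dist ((u k : Q) : E) ((σ (n + 1)).1.1 a) ≤ (1 / 2 : ℝ) ^ n := by
        rw [dist_comm, dist_eq_norm]
        rw [hn, Nat.unpair_pair] at haq
        exact haq
      have h3 : dist ((σ (n + 1)).1.1 a) (G a) ≤ (1 / 2 : ℝ) ^ n := by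
        rw [dist_comm, dist_eq_norm]
        refine hGa.trans_eq ?_
        rw [pow_succ]; ring
      have := dist_triangle4 y (u k) ((σ (n + 1)).1.1 a) (G a)
      linarith

end Recursion

/-! ### Expanding dynamics on a polydomain of squares -/

section FourthRoot

/-- The principal branch of the fourth root. -/
noncomputable def root (w : ℂ) : ℂ := (w ^ (2⁻¹ : ℂ)) ^ (2⁻¹ : ℂ)

lemma root_pow_four (w : ℂ) : root w ^ 4 = w := by
  rw [root, show 4 = 2 * 2 from rfl, pow_mul]
  rw [Complex.cpow_ofNat_inv_pow, Complex.cpow_ofNat_inv_pow]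

lemma sq_mem_slitPlane {z : ℂ} (hz : 0 < z.re) : z ^ 2 ∈ Complex.slitPlane := by
  rw [Complex.mem_slitPlane_iff, pow_two, Complex.mul_re, Complex.mul_im]
  by_cases h : z.im = 0
  · left; rw [h]; nlinarith
  · right
    have : z.re * z.im ≠ 0 := mul_ne_zero hz.ne' h
    intro h'; apply this; linarith

lemma sq_re_pos {z : ℂ} (hz : |z.im| < z.re) : 0 < (z ^ 2).re := by
  rw [pow_two, Complex.mul_re]
  nlinarith [abs_nonneg z.im, sq_abs z.im]

lemma root_pow {z : ℂ} (hz : |z.im| < z.re) : root (z ^ 4) = z := by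
  rw [root, show z ^ 4 = (z ^ 2) ^ 2 by ring, Complex.sq_cpow_two_inv (sq_re_pos hz),
    Complex.sq_cpow_two_inv ((abs_nonneg _).trans_lt hz)]

lemma pow_four_mem_slitPlane {z : ℂ} (hz : |z.im| < z.re) : z ^ 4 ∈ Complex.slitPlane := by
  rw [show z ^ 4 = (z ^ 2) ^ 2 by ring]
  exact sq_mem_slitPlane (sq_re_pos hz)

lemma cpow_half_re_pos {w : ℂ} (hw : w ∈ Complex.slitPlane) : 0 < (w ^ (2⁻¹ : ℂ)).re := by
  have h0 : w ≠ 0 := Complex.slitPlane_ne_zero hw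
  rw [Complex.cpow_def_of_ne_zero h0, Complex.exp_re]
  refine mul_pos (Real.exp_pos _) (Real.cos_pos_of_mem_Ioo ?_)
  have h1 : (Complex.log w * 2⁻¹).im = w.arg / 2 := by
    rw [show (2⁻¹ : ℂ) = ((2⁻¹ : ℝ) : ℂ) by push_cast; rfl, Complex.im_mul_ofReal, Complex.log_im]
    ring
  rw [h1]
  have h2 := Complex.neg_pi_lt_arg w
  have h3 := lt_of_le_of_ne (Complex.arg_le_pi w) (Complex.mem_slitPlane_iff_arg.1 hw).1
  constructor <;> linarith

lemma differentiableAt_root {w : ℂ} (hw : w ∈ Complex.slitPlane) :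
    DifferentiableAt ℂ root w := by
  have h1 : DifferentiableAt ℂ (fun x : ℂ => x ^ (2⁻¹ : ℂ)) w :=
    differentiableAt_id.cpow_const hw
  exact h1.cpow_const (Or.inl (cpow_half_re_pos hw))

end FourthRoot

section Dynamics

/-- The `ℓ¹` norm on `ℂ = ℝ²`. -/
def absSum (z : ℂ) : ℝ := |z.re| + |z.im|

lemma continuous_absSum : Continuous absSum := by unfold absSum; fun_prop

lemma absSum_real_mul (t : ℝ) (z : ℂ) : absSum (t * z) = |t| * absSum z := by
  simp [absSum, abs_mul, mul_add]

lemma absSum_I_pow_mul (k : ℕ) (z : ℂ) : absSum (Complex.I ^ k * z) = absSum z := by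
  induction k with
  | zero => simp
  | succ k ih =>
    rw [pow_succ', mul_assoc, ← ih]
    simp only [absSum, Complex.I_mul_re, Complex.I_mul_im, abs_neg]
    ring

lemma absSum_add_le (z w : ℂ) : absSum (z + w) ≤ absSum z + absSum w := by
  simp only [absSum, Complex.add_re, Complex.add_im]
  linarith [abs_add_le z.re w.re, abs_add_le z.im w.im]

/-- Some rotation by a multiple of a right angle moves `z` into the sector `|arg z| ≤ π / 4`. -/
lemma exists_I_pow_mul (z : ℂ) :
    ∃ k : Fin 4, |(Complex.I ^ (k : ℕ) * z).im| ≤ (Complex.I ^ (k : ℕ) * z).re := by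
  have h3 : Complex.I ^ 3 = -Complex.I := by
    rw [pow_succ, Complex.I_sq]; ring
  by_cases h : |z.im| ≤ |z.re|
  · rcases le_total 0 z.re with h1 | h1
    · exact ⟨0, by simpa [abs_of_nonneg h1] using h⟩
    · exact ⟨2, by simpa [abs_of_nonpos h1] using h⟩
  · rcases le_total 0 z.im with h1 | h1
    · exact ⟨3, by simpa [h3, abs_of_nonneg h1] using (not_le.1 h).le⟩
    · exact ⟨1, by simpa [abs_of_nonpos h1] using (not_le.1 h).le⟩

variable {m : ℕ}

local notation "V" => EuclideanSpace ℂ (Fin m)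

/-- The polydomain whose factors are the open square with vertices `0`, `1 ± i`, `2`. -/
def tile (m : ℕ) : Set (EuclideanSpace ℂ (Fin m)) := {z | ∀ i, absSum (z i - 1) < 1}

/-- The closed version of `tile`. -/
def closedTile (m : ℕ) : Set (EuclideanSpace ℂ (Fin m)) := {z | ∀ i, absSum (z i - 1) ≤ 1}

lemma isOpen_tile : IsOpen (tile m) := by
  have : tile m = ⋂ i, {z : V | absSum (z i - 1) < 1} := by
    ext z; simp [tile]
  rw [this]
  refine isOpen_iInter_of_finite fun i => ?_
  have h1 : Continuous (fun z : V => absSum (z i - 1)) := continuous_absSum.comp (by fun_prop)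
  exact isOpen_lt h1 continuous_const

lemma convex_tile : Convex ℝ (tile m) := by
  intro x hx y hy a b ha hb hab i
  have h1 : (a • x + b • y) i - 1 = (a : ℂ) * (x i - 1) + (b : ℂ) * (y i - 1) := by
    have : (a : ℂ) + b = 1 := by exact_mod_cast hab
    simp only [PiLp.add_apply, PiLp.smul_apply, Complex.real_smul]
    linear_combination this
  rw [h1]
  refine (absSum_add_le _ _).trans_lt ?_
  rw [absSum_real_mul, absSum_real_mul, abs_of_nonneg ha, abs_of_nonneg hb]
  have hxi := hx i
  have hyi := hy i
  rcases ha.eq_or_lt with rfl | ha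
  · rw [zero_add] at hab; subst hab; linarith
  · nlinarith

/-- The centre of the tile. -/
noncomputable def tileCenter (m : ℕ) : EuclideanSpace ℂ (Fin m) := WithLp.toLp 2 fun _ => 1

lemma tileCenter_mem : tileCenter m ∈ tile m := by
  intro i; simp [tileCenter, absSum]

lemma sector_of_mem_tile {z : V} (hz : z ∈ tile m) (i : Fin m) : |(z i).im| < (z i).re := by
  have := hz i
  simp only [absSum, Complex.sub_re, Complex.one_re, Complex.sub_im, Complex.one_im,
    sub_zero] at this
  linarith [neg_abs_le ((z i).re - 1)]

lemma absSum_lt_of_mem_tile {z : V} (hz : z ∈ tile m) (i : Fin m) : absSum (z i) < 2 := by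
  have h := absSum_add_le (z i - 1) 1
  rw [sub_add_cancel] at h
  have h1 : absSum 1 = 1 := by simp [absSum]
  linarith [hz i]

lemma closedTile_subset_closure : closedTile m ⊆ closure (tile m) := by
  intro x hx
  have h1 : ∀ t ∈ Ioo (0 : ℝ) 1, x + (t : ℂ) • (tileCenter m - x) ∈ tile m := by
    intro t ht i
    have : (x + (t : ℂ) • (tileCenter m - x)) i - 1 = ((1 - t : ℝ) : ℂ) * (x i - 1) := by
      simp [tileCenter]; ring
    rw [this, absSum_real_mul, abs_of_pos (by linarith [ht.2])]
    have h2 : 0 ≤ absSum (x i - 1) := by unfold absSum; positivity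
    nlinarith [hx i, ht.1, ht.2]
  have h2 : Tendsto (fun t : ℝ => x + (t : ℂ) • (tileCenter m - x)) (𝓝[>] 0) (𝓝 x) := by
    have : Continuous (fun t : ℝ => x + (t : ℂ) • (tileCenter m - x)) := by fun_prop
    have h3 := this.tendsto 0
    simp only [Complex.ofReal_zero, zero_smul, add_zero] at h3
    exact h3.mono_left nhdsWithin_le_nhds
  exact mem_closure_of_tendsto h2 (by
    filter_upwards [Ioo_mem_nhdsGT (zero_lt_one' ℝ)] with t ht using h1 t ht)

/-- The expanding branches `z ↦ i ^ s • 2 (z - 1)`. -/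
noncomputable def branch (s : Fin m → Fin 4) (z : V) : V :=
  WithLp.toLp 2 fun i => Complex.I ^ (s i : ℕ) * (2 * (z i - 1))

lemma continuous_branch (s : Fin m → Fin 4) : Continuous (branch s) := by
  unfold branch; fun_prop

lemma norm_branch_sub (s : Fin m → Fin 4) (x y : V) :
    dist (branch s x) (branch s y) = 2 * dist x y := by
  rw [EuclideanSpace.dist_eq, EuclideanSpace.dist_eq, ← Real.sqrt_sq (show (0 : ℝ) ≤ 2 by norm_num),
    ← Real.sqrt_mul (by positivity), Finset.mul_sum]
  congr 1
  refine Finset.sum_congr rfl fun i _ => ?_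
  have : branch s x i - branch s y i = Complex.I ^ (s i : ℕ) * 2 * (x i - y i) := by
    simp only [branch]; ring
  rw [dist_eq_norm, dist_eq_norm, this, norm_mul, norm_mul, norm_pow, Complex.norm_I, one_pow]
  simp; ring

lemma branch_surjective (s : Fin m → Fin 4) : Function.Surjective (branch s) := by
  intro z
  refine ⟨WithLp.toLp 2 fun i => 1 + (Complex.I ^ (s i : ℕ))⁻¹ * z i / 2, ?_⟩
  ext i
  have : Complex.I ^ (s i : ℕ) ≠ 0 := pow_ne_zero _ Complex.I_ne_zero
  simp only [branch]
  field_simp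
  ring

lemma mem_tile_of_branch_mem {s : Fin m → Fin 4} {z : V} (h : branch s z ∈ tile m) :
    z ∈ tile m := by
  intro i
  have h1 := absSum_lt_of_mem_tile h i
  simp only [branch] at h1
  rw [absSum_I_pow_mul, show (2 : ℂ) * (z i - 1) = ((2 : ℝ) : ℂ) * (z i - 1) by push_cast; rfl,
    absSum_real_mul, abs_of_pos (by norm_num : (0 : ℝ) < 2)] at h1
  linarith

lemma exists_branch_mem_closedTile {z : V} (hz : z ∈ closedTile m) :
    ∃ s, branch s z ∈ closedTile m := by
  choose s hs using fun i => exists_I_pow_mul (2 * (z i - 1))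
  refine ⟨s, fun i => ?_⟩
  have h1 : absSum (branch s z i) ≤ 2 := by
    simp only [branch]
    rw [absSum_I_pow_mul, show (2 : ℂ) * (z i - 1) = ((2 : ℝ) : ℂ) * (z i - 1) by push_cast; rfl,
      absSum_real_mul, abs_of_pos (by norm_num : (0 : ℝ) < 2)]
    linarith [hz i]
  have h2 : |(branch s z i).im| ≤ (branch s z i).re := hs i
  have h3 := abs_of_nonneg ((abs_nonneg _).trans h2)
  simp only [absSum, Complex.sub_re, Complex.one_re, Complex.sub_im, Complex.one_im, sub_zero]
    at h1 ⊢
  rcases abs_cases ((branch s z i).re - 1) with ⟨h4, -⟩ | ⟨h4, -⟩ <;> rw [h4] <;> linarith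

/-- The points some branch maps into `A`. -/
def pull (A : Set V) : Set V := ⋃ s : Fin m → Fin 4, branch s ⁻¹' A

lemma isOpen_pull_iterate {A : Set V} (hA : IsOpen A) (n : ℕ) : IsOpen (pull^[n] A) := by
  induction n with
  | zero => exact hA
  | succ n ih =>
    rw [Function.iterate_succ_apply']
    exact isOpen_iUnion fun s => ih.preimage (continuous_branch s)

lemma pull_iterate_subset {A : Set V} (hA : A ⊆ tile m) (n : ℕ) : pull^[n] A ⊆ tile m := by
  induction n with
  | zero => exact hA
  | succ n ih =>
    rw [Function.iterate_succ_apply']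
    intro z hz
    obtain ⟨s, hs⟩ := mem_iUnion.1 hz
    exact mem_tile_of_branch_mem (ih hs)

lemma pull_iterate_near {A : Set V} {δ : ℝ} (h : ∀ x ∈ closedTile m, ∃ a ∈ A, dist x a ≤ δ)
    (n : ℕ) : ∀ x ∈ closedTile m, ∃ a ∈ pull^[n] A, dist x a ≤ δ / 2 ^ n := by
  induction n with
  | zero => simpa using h
  | succ n ih =>
    intro x hx
    obtain ⟨s, hs⟩ := exists_branch_mem_closedTile hx
    obtain ⟨a, ha, hd⟩ := ih _ hs
    obtain ⟨y, rfl⟩ := branch_surjective s a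
    rw [Function.iterate_succ_apply']
    refine ⟨y, mem_iUnion.2 ⟨s, ha⟩, ?_⟩
    rw [norm_branch_sub] at hd
    rw [pow_succ, ← div_div, le_div_iff₀ (by norm_num)]
    linarith

/-- The coordinatewise fourth power. -/
noncomputable def powFour (z : V) : V := WithLp.toLp 2 fun i => z i ^ 4

/-- The coordinatewise principal fourth root. -/
noncomputable def rootMap (w : V) : V := WithLp.toLp 2 fun i => root (w i)

/-- The expanding map of the tile whose branches are the maps `branch s`. -/
noncomputable def tileMap (z : V) : V := WithLp.toLp 2 fun i => root ((2 * (z i - 1)) ^ 4)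

lemma tileMap_eq_branch {s : Fin m → Fin 4} {z : V} (h : branch s z ∈ tile m) :
    tileMap z = branch s z := by
  ext i
  have h1 := root_pow (sector_of_mem_tile h i)
  simp only [branch, tileMap] at h1 ⊢
  rw [mul_pow, ← pow_mul, mul_comm _ 4, pow_mul, Complex.I_pow_four, one_pow, one_mul] at h1
  exact h1

lemma tileMap_iterate_mem {A : Set V} (hA : A ⊆ tile m) (n : ℕ) :
    ∀ z ∈ pull^[n] A, tileMap^[n] z ∈ A := by
  induction n with
  | zero => exact fun z hz => hz
  | succ n ih =>
    intro z hz
    rw [Function.iterate_succ_apply'] at hz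
    obtain ⟨s, hs⟩ := mem_iUnion.1 hz
    rw [Function.iterate_succ_apply, tileMap_eq_branch (pull_iterate_subset hA n hs)]
    exact ih _ hs

lemma closedTile_superset : tile m ⊆ closedTile m := fun _ hz i => (hz i).le

lemma isBounded_tile : Bornology.IsBounded (tile m) := by
  refine (isBounded_iff_forall_norm_le.2 ⟨Real.sqrt (∑ _i : Fin m, 4), fun z hz => ?_⟩)
  rw [EuclideanSpace.norm_eq]
  refine Real.sqrt_le_sqrt (Finset.sum_le_sum fun i _ => ?_)
  have h1 := absSum_lt_of_mem_tile hz i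
  have h2 := Complex.norm_le_abs_re_add_abs_im (z i)
  unfold absSum at h1
  nlinarith [norm_nonneg (z i)]

/-- A Baire category argument: for `U₀` open and dense in the tile, some orbit of `tileMap` stays
in `U₀` and is dense in the tile. -/
lemma exists_dense_orbit {U₀ : Set V} (hU : IsOpen U₀) (hUt : U₀ ⊆ tile m)
    (hUd : tile m ⊆ closure U₀) :
    ∃ z₀ : V, (∀ n, tileMap^[n] z₀ ∈ U₀) ∧ tile m ⊆ closure (range fun n => tileMap^[n] z₀) := by
  obtain ⟨R, hR⟩ := Metric.isBounded_iff.1 (isBounded_tile (m := m)).closure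
  set N : Set V := (closure (tile m))ᶜ with hN
  have hNo : IsOpen N := isClosed_closure.isOpen_compl
  have hdense : ∀ O : Set V, tile m ⊆ closure O → Dense (O ∪ N) := by
    intro O hO x
    by_cases hx : x ∈ closure (tile m)
    · exact closure_mono subset_union_left (closure_minimal hO isClosed_closure hx)
    · exact subset_closure (Or.inr hx)
  have hnear : ∀ δ > 0, ∀ x ∈ closedTile m, ∃ a ∈ U₀, dist x a ≤ δ := by
    intro δ hδ x hx
    obtain ⟨a, ha, hd⟩ := Metric.mem_closure_iff.1
      (closure_minimal hUd isClosed_closure (closedTile_subset_closure hx)) δ hδ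
    exact ⟨a, ha, hd.le⟩
  set B := {b ∈ TopologicalSpace.countableBasis V | (b ∩ tile m).Nonempty} with hB
  have hBc : B.Countable := (TopologicalSpace.countable_countableBasis V).mono (sep_subset _ _)
  have hBo : ∀ b ∈ B, IsOpen b := fun b hb => TopologicalSpace.isOpen_of_mem_countableBasis hb.1
  have hd1 : Dense (⋂ n : ℕ, (pull^[n] U₀ ∪ N)) := by
    refine dense_iInter_of_isOpen_nat (fun n => (isOpen_pull_iterate hU n).union hNo) fun n => ?_
    refine hdense _ fun x hx => Metric.mem_closure_iff.2 fun ε hε => ?_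
    obtain ⟨a, ha, hd⟩ := pull_iterate_near (hnear (ε / 2) (by positivity)) n x
      (closedTile_superset hx)
    refine ⟨a, ha, hd.trans_lt ?_⟩
    have h1 : (1 : ℝ) ≤ 2 ^ n := one_le_pow₀ (by norm_num)
    rw [div_lt_iff₀ (by positivity)]
    nlinarith
  have hd2 : Dense (⋂ b ∈ B, ((⋃ n : ℕ, pull^[n] (b ∩ tile m)) ∪ N)) := by
    refine dense_biInter_of_isOpen (fun b hb => (isOpen_iUnion fun n =>
      isOpen_pull_iterate ((hBo b hb).inter isOpen_tile) n).union hNo) hBc fun b hb => ?_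
    refine hdense _ fun x hx => Metric.mem_closure_iff.2 fun ε hε => ?_
    obtain ⟨y, hy⟩ := hb.2
    obtain ⟨n, hn⟩ := exists_pow_lt_of_lt_one (show 0 < ε / (|R| + 1) by positivity)
      (by norm_num : (1 / 2 : ℝ) < 1)
    obtain ⟨a, ha, hd⟩ := pull_iterate_near (A := b ∩ tile m) (δ := |R|)
      (fun x hx => ⟨y, hy, (hR (closedTile_subset_closure hx) (subset_closure hy.2)).trans
        (le_abs_self R)⟩) n x (closedTile_superset hx)
    refine ⟨a, mem_iUnion.2 ⟨n, ha⟩, hd.trans_lt ?_⟩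
    rw [lt_div_iff₀ (by positivity), one_div, inv_pow, inv_mul_lt_iff₀ (by positivity)] at hn
    rw [div_lt_iff₀ (by positivity)]
    linarith
  have hG1 : IsGδ (⋂ n : ℕ, (pull^[n] U₀ ∪ N)) :=
    IsGδ.iInter_of_isOpen fun n => (isOpen_pull_iterate hU n).union hNo
  have hG2 : IsGδ (⋂ b ∈ B, ((⋃ n : ℕ, pull^[n] (b ∩ tile m)) ∪ N)) :=
    IsGδ.biInter_of_isOpen hBc fun b hb => (isOpen_iUnion fun n =>
      isOpen_pull_iterate ((hBo b hb).inter isOpen_tile) n).union hNo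
  obtain ⟨z₀, hz₀t, hz1, hz2⟩ := (hd1.inter_of_Gδ hG1 hG2 hd2).inter_open_nonempty
    (tile m) isOpen_tile ⟨_, tileCenter_mem⟩
  have hz₀N : z₀ ∉ N := fun h => h (subset_closure hz₀t)
  refine ⟨z₀, fun n => ?_, fun x hx => ?_⟩
  · exact tileMap_iterate_mem hUt n z₀ ((mem_iInter.1 hz1 n).resolve_right hz₀N)
  · rw [(TopologicalSpace.isBasis_countableBasis V).mem_closure_iff]
    intro b hb hxb
    have := (mem_iInter₂.1 hz2 b ⟨hb, x, hxb, hx⟩).resolve_right hz₀N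
    obtain ⟨n, hn⟩ := mem_iUnion.1 this
    exact ⟨_, (tileMap_iterate_mem inter_subset_right n z₀ hn).1, n, rfl⟩

end Dynamics

/-! ### The Schwarz–Christoffel map of the disc onto a square -/

section SchwarzChristoffel

/-- The plane with the four rays `{t * I ^ k | 1 ≤ t}` removed. -/
def scDomain : Set ℂ := {z | 1 - z ^ 4 ∈ Complex.slitPlane}

/-- The Schwarz–Christoffel integrand `(1 - z ^ 4) ^ (-1/2)`. -/
noncomputable def scDeriv (z : ℂ) : ℂ := ((1 - z ^ 4) ^ (2⁻¹ : ℂ))⁻¹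

/-- The Schwarz–Christoffel integral of `scDeriv` along the segment from `0` to `z`. -/
noncomputable def sc (z : ℂ) : ℂ := ∫ t in (0 : ℝ)..1, z * scDeriv (t * z)

lemma isOpen_scDomain : IsOpen scDomain :=
  Complex.isOpen_slitPlane.preimage (by fun_prop)

lemma real_mul_mem_scDomain {z : ℂ} (hz : z ∈ scDomain) {t : ℝ} (h0 : 0 ≤ t) (h1 : t ≤ 1) :
    (t : ℂ) * z ∈ scDomain := by
  have := Complex.starConvex_one_slitPlane hz (a := 1 - t ^ 4) (b := t ^ 4)
    (by have := pow_le_one₀ h0 h1 (n := 4); linarith) (by positivity) (by ring)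
  simp only [scDomain, mem_ofPred_eq]
  convert this using 1
  simp only [Complex.real_smul]
  push_cast
  ring

lemma ball_subset_scDomain : ball (0 : ℂ) 1 ⊆ scDomain := by
  intro z hz
  rw [mem_ball_zero_iff] at hz
  left
  have h1 : ‖z ^ 4‖ < 1 := by rw [norm_pow]; exact pow_lt_one₀ (norm_nonneg _) hz (by norm_num)
  have h2 := Complex.re_le_norm (z ^ 4)
  simp only [Complex.sub_re, Complex.one_re]
  linarith

lemma scDeriv_ne_zero {z : ℂ} (hz : z ∈ scDomain) : scDeriv z ≠ 0 := by
  have := cpow_half_re_pos hz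
  refine inv_ne_zero fun h => ?_
  rw [h] at this
  simp at this

lemma scDeriv_sq (z : ℂ) : scDeriv z ^ 2 = (1 - z ^ 4)⁻¹ := by
  rw [scDeriv, inv_pow, Complex.cpow_ofNat_inv_pow]

lemma scDeriv_re_pos {z : ℂ} (hz : z ∈ scDomain) : 0 < (scDeriv z).re := by
  have := cpow_half_re_pos hz
  rw [scDeriv, Complex.inv_re]
  refine div_pos this (Complex.normSq_pos.2 fun h => ?_)
  rw [h] at this
  simp at this

lemma differentiableOn_scDeriv : DifferentiableOn ℂ scDeriv scDomain := by
  intro z hz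
  have h1 : DifferentiableAt ℂ (fun x : ℂ => (1 - x ^ 4) ^ (2⁻¹ : ℂ)) z :=
    DifferentiableAt.cpow_const (by fun_prop) hz
  refine (h1.inv fun h => ?_).differentiableWithinAt
  have := cpow_half_re_pos hz
  rw [h] at this
  simp at this

lemma measurable_scDeriv : Measurable scDeriv := by unfold scDeriv; fun_prop

/-- On the star-shaped domain `scDomain`, the integral `sc` is a primitive of `scDeriv`. -/
lemma hasDerivAt_sc {z₀ : ℂ} (hz₀ : z₀ ∈ scDomain) : HasDerivAt sc (scDeriv z₀) z₀ := by
  obtain ⟨r, hr, hball⟩ := nhds_basis_closedBall.mem_iff.1 (isOpen_scDomain.mem_nhds hz₀)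
  have hd : ∀ z ∈ scDomain, HasDerivAt scDeriv (deriv scDeriv z) z := fun z hz =>
    (differentiableOn_scDeriv.differentiableAt (isOpen_scDomain.mem_nhds hz)).hasDerivAt
  have hc' : ContinuousOn (deriv scDeriv) scDomain :=
    (differentiableOn_scDeriv.deriv isOpen_scDomain).continuousOn
  have hmaps : MapsTo (fun p : ℝ × ℂ => (p.1 : ℂ) * p.2) (Icc (0 : ℝ) 1 ×ˢ closedBall z₀ r)
      scDomain := fun p hp => real_mul_mem_scDomain (hball hp.2) hp.1.1 hp.1.2
  have hmc : Continuous (fun p : ℝ × ℂ => (p.1 : ℂ) * p.2) := by fun_prop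
  have hG : ContinuousOn (fun p : ℝ × ℂ => scDeriv (p.1 * p.2) +
      p.2 * (p.1 * deriv scDeriv (p.1 * p.2))) (Icc (0 : ℝ) 1 ×ˢ closedBall z₀ r) := by
    refine (differentiableOn_scDeriv.continuousOn.comp hmc.continuousOn hmaps).add ?_
    refine continuousOn_snd.mul (ContinuousOn.mul (by fun_prop) ?_)
    exact hc'.comp hmc.continuousOn hmaps
  obtain ⟨C, hC⟩ := (isCompact_Icc.prod (isCompact_closedBall z₀ r)).exists_bound_of_continuousOn hG
  have hz₀r : z₀ ∈ closedBall z₀ r := mem_closedBall_self hr.le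
  have hline : ContinuousOn (fun t : ℝ => ((t, z₀) : ℝ × ℂ)) (Icc (0 : ℝ) 1) := by fun_prop
  have hlm : MapsTo (fun t : ℝ => ((t, z₀) : ℝ × ℂ)) (Icc (0 : ℝ) 1)
      (Icc (0 : ℝ) 1 ×ˢ closedBall z₀ r) := fun t ht => ⟨ht, hz₀r⟩
  have hGt := hG.comp hline hlm
  have hFt : ContinuousOn (fun t : ℝ => z₀ * scDeriv (t * z₀)) (Icc (0 : ℝ) 1) :=
    continuousOn_const.mul (differentiableOn_scDeriv.continuousOn.comp (by fun_prop)
      fun t ht => real_mul_mem_scDomain hz₀ ht.1 ht.2)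
  have key := (intervalIntegral.hasDerivAt_integral_of_dominated_loc_of_deriv_le
    (μ := MeasureTheory.volume) (a := 0) (b := 1)
    (F := fun z (t : ℝ) => z * scDeriv (t * z))
    (F' := fun z (t : ℝ) => scDeriv (t * z) + z * (t * deriv scDeriv (t * z)))
    (bound := fun _ => C) (closedBall_mem_nhds z₀ hr) ?_ ?_ ?_ ?_ ?_ ?_).2
  · have hinterior : ∫ t in (0 : ℝ)..1, (scDeriv (t * z₀) + z₀ * (t * deriv scDeriv (t * z₀))) =
        scDeriv z₀ := by
      have := intervalIntegral.integral_eq_sub_of_hasDerivAt (a := 0) (b := 1)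
        (f := fun t : ℝ => (t : ℂ) * scDeriv (t * z₀))
        (f' := fun t : ℝ => scDeriv (t * z₀) + z₀ * (t * deriv scDeriv (t * z₀))) ?_ ?_
      · rw [this]; simp
      · intro t ht
        rw [uIcc_of_le zero_le_one] at ht
        have h1 : HasDerivAt (fun t : ℝ => (t : ℂ)) 1 t := Complex.ofRealCLM.hasDerivAt
        have h2 := (hd _ (real_mul_mem_scDomain hz₀ ht.1 ht.2)).comp t (h1.mul_const z₀)
        refine (h1.mul h2).congr_deriv ?_
        simp only [Function.comp_apply]
        ring
      · apply ContinuousOn.intervalIntegrable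
        rw [uIcc_of_le zero_le_one]
        exact hGt
    rw [hinterior] at key
    exact key
  · refine Eventually.of_forall fun z => Measurable.aestronglyMeasurable ?_
    exact (measurable_scDeriv.comp (by fun_prop)).const_mul z
  · apply ContinuousOn.intervalIntegrable
    rw [uIcc_of_le zero_le_one]
    exact hFt
  · rw [uIoc_of_le zero_le_one]
    exact (hGt.mono Ioc_subset_Icc_self).aestronglyMeasurable measurableSet_Ioc
  · refine Eventually.of_forall fun t ht z hz => ?_
    rw [uIoc_of_le zero_le_one] at ht
    exact hC (t, z) ⟨⟨ht.1.le, ht.2⟩, hz⟩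
  · exact intervalIntegrable_const
  · refine Eventually.of_forall fun t ht z hz => ?_
    rw [uIoc_of_le zero_le_one] at ht
    have h2 := (hd _ (real_mul_mem_scDomain (hball hz) ht.1.le ht.2)).comp z
      ((hasDerivAt_id z).const_mul (t : ℂ))
    refine ((hasDerivAt_id z).mul h2).congr_deriv ?_
    simp only [Function.comp_apply, id_eq]
    ring

lemma norm_scDeriv_le {z : ℂ} (hz : z ∈ closedBall (0 : ℂ) 1) {t : ℝ} (h0 : 0 ≤ t) (h1 : t < 1) :
    ‖scDeriv (t * z)‖ ≤ (1 - t) ^ (-2⁻¹ : ℝ) := by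
  rw [mem_closedBall_zero_iff] at hz
  have h2 : 1 - t ≤ ‖1 - ((t : ℂ) * z) ^ 4‖ := by
    have h3 : ‖((t : ℂ) * z) ^ 4‖ ≤ t := by
      rw [norm_pow, norm_mul, Complex.norm_real, Real.norm_of_nonneg h0]
      have h4 : t * ‖z‖ ≤ t := mul_le_of_le_one_right h0 hz
      calc (t * ‖z‖) ^ 4 ≤ t ^ 4 := by gcongr
        _ ≤ t ^ 1 := pow_le_pow_of_le_one h0 h1.le (by norm_num)
        _ = t := pow_one t
    have := norm_sub_norm_le (1 : ℂ) (((t : ℂ) * z) ^ 4)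
    rw [norm_one] at this
    linarith
  rw [scDeriv, norm_inv, show (2⁻¹ : ℂ) = ((2⁻¹ : ℝ) : ℂ) by push_cast; rfl,
    Complex.norm_cpow_real, Real.rpow_neg (by linarith)]
  have : 0 < 1 - t := by linarith
  gcongr

/-- The square-root singularities of `scDeriv` at the fourth roots of unity are integrable. -/
lemma continuousOn_sc : ContinuousOn sc (closedBall 0 1) := by
  intro z₀ hz₀
  refine intervalIntegral.continuousWithinAt_of_dominated_interval
    (bound := fun t => (1 - t) ^ (-2⁻¹ : ℝ)) ?_ ?_ ?_ ?_
  · refine Eventually.of_forall fun z => Measurable.aestronglyMeasurable ?_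
    exact (measurable_scDeriv.comp (by fun_prop)).const_mul z
  · filter_upwards [self_mem_nhdsWithin] with z hz
    have : ∀ᵐ t : ℝ, t ≠ 1 := by simp [MeasureTheory.ae_iff]
    filter_upwards [this] with t ht1 ht
    rw [uIoc_of_le zero_le_one] at ht
    rw [norm_mul]
    have h1 := norm_scDeriv_le hz ht.1.le (lt_of_le_of_ne ht.2 ht1)
    have h2 : ‖z‖ ≤ 1 := by simpa using hz
    nlinarith [norm_nonneg z, norm_nonneg (scDeriv (t * z))]
  · have := (intervalIntegral.intervalIntegrable_rpow' (a := 0) (b := 1) (r := -2⁻¹)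
      (by norm_num)).comp_sub_left 1
    simpa using this.symm
  · have : ∀ᵐ t : ℝ, t ≠ 1 := by simp [MeasureTheory.ae_iff]
    filter_upwards [this] with t ht1 ht
    rw [uIoc_of_le zero_le_one] at ht
    have h1 : (t : ℂ) * z₀ ∈ scDomain := by
      apply ball_subset_scDomain
      rw [mem_ball_zero_iff, norm_mul, Complex.norm_real, Real.norm_of_nonneg ht.1.le]
      have h2 : ‖z₀‖ ≤ 1 := by simpa using hz₀
      have := lt_of_le_of_ne ht.2 ht1
      nlinarith [ht.1]
    have h3 : ContinuousAt scDeriv (t * z₀) :=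
      (differentiableOn_scDeriv.differentiableAt (isOpen_scDomain.mem_nhds h1)).continuousAt
    have h4 : ContinuousAt (fun z : ℂ => (t : ℂ) * z) z₀ := by fun_prop
    exact (continuousAt_id.mul (ContinuousAt.comp (f := fun z : ℂ => (t : ℂ) * z) h3 h4)).continuousWithinAt

lemma sc_zero : sc 0 = 0 := by simp [sc]

lemma sc_I_pow_mul (k : ℕ) (z : ℂ) : sc (Complex.I ^ k * z) = Complex.I ^ k * sc z := by
  have h : ∀ w, scDeriv (Complex.I ^ k * w) = scDeriv w := by
    intro w
    rw [scDeriv, scDeriv, mul_pow, ← pow_mul, mul_comm k 4, pow_mul, Complex.I_pow_four, one_pow,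
      one_mul]
  simp only [sc]
  rw [← intervalIntegral.integral_const_mul]
  congr 1
  ext t
  rw [mul_left_comm (t : ℂ), h]
  ring

end SchwarzChristoffel

section SchwarzChristoffel

lemma hasStrictDerivAt_sc {z : ℂ} (hz : z ∈ scDomain) : HasStrictDerivAt sc (scDeriv z) z := by
  refine hasStrictDerivAt_of_hasDerivAt_of_continuousAt (f' := scDeriv) ?_ ?_
  · filter_upwards [isOpen_scDomain.mem_nhds hz] with y hy using hasDerivAt_sc hy
  · exact (differentiableOn_scDeriv.differentiableAt (isOpen_scDomain.mem_nhds hz)).continuousAt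

/-- Since the derivative of `sc` has positive real part, so has each of its difference quotients. -/
lemma sc_quotient_re_pos {a b : ℂ} (ha : a ∈ ball (0 : ℂ) 1) (hb : b ∈ ball (0 : ℂ) 1)
    (hab : a ≠ b) : 0 < ((sc b - sc a) / (b - a)).re := by
  have hba : b - a ≠ 0 := sub_ne_zero.2 hab.symm
  have hseg : ∀ t ∈ Icc (0 : ℝ) 1, a + t * (b - a) ∈ scDomain := by
    intro t ht
    apply ball_subset_scDomain
    have := (convex_ball (0 : ℂ) 1).add_smul_sub_mem ha hb ht
    simpa [Complex.real_smul] using this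
  have hd : ∀ t ∈ Icc (0 : ℝ) 1, HasDerivAt (fun t : ℝ => (sc (a + t * (b - a)) / (b - a)).re)
      (scDeriv (a + t * (b - a))).re t := by
    intro t ht
    have h1 : HasDerivAt (fun t : ℝ => a + (t : ℂ) * (b - a)) (1 * (b - a)) t :=
      ((Complex.ofRealCLM.hasDerivAt (x := t)).mul_const (b - a)).const_add a
    have h2 := ((hasDerivAt_sc (hseg t ht)).comp t h1).div_const (b - a)
    have h3 := Complex.reCLM.hasFDerivAt.comp_hasDerivAt t h2
    refine h3.congr_deriv ?_
    rw [one_mul, mul_div_assoc, div_self hba, mul_one]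
    rfl
  obtain ⟨c, hc, h⟩ := exists_hasDerivAt_eq_slope
    (fun t : ℝ => (sc (a + t * (b - a)) / (b - a)).re)
    (fun t : ℝ => (scDeriv (a + t * (b - a))).re) (zero_lt_one)
    (fun t ht => (hd t ht).continuousAt.continuousWithinAt)
    (fun t ht => hd t (Ioo_subset_Icc_self ht))
  have h1 := scDeriv_re_pos (hseg c (Ioo_subset_Icc_self hc))
  simp only [h, Complex.ofReal_one, Complex.ofReal_zero, one_mul, zero_mul, add_zero,
    add_sub_cancel, sub_zero, div_one] at h1
  rwa [sub_div, Complex.sub_re]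

lemma injOn_sc : InjOn sc (ball 0 1) := by
  intro a ha b hb hab
  by_contra hne
  have := sc_quotient_re_pos ha hb hne
  rw [hab] at this
  simp at this

lemma sc_ofReal_im {y : ℝ} (hy : |y| < 1) : (sc y).im = 0 := by
  have h : sc y = ((∫ t in (0 : ℝ)..1, y * ((1 - (t * y) ^ 4) ^ (2⁻¹ : ℝ))⁻¹ : ℝ) : ℂ) := by
    rw [← intervalIntegral.integral_ofReal, sc]
    refine intervalIntegral.integral_congr fun t ht => ?_
    rw [uIcc_of_le zero_le_one] at ht
    have h1 : |t * y| ≤ 1 := by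
      rw [abs_mul, abs_of_nonneg ht.1]
      nlinarith [ht.1, ht.2, abs_nonneg y]
    have h2 : 0 ≤ 1 - (t * y) ^ 4 := by
      have := pow_le_one₀ (abs_nonneg _) h1 (n := 4)
      rw [Even.pow_abs (by decide)] at this
      linarith
    simp only [scDeriv]
    push_cast
    rw [Complex.ofReal_cpow h2]
    push_cast
    rfl
  rw [h, Complex.ofReal_im]

lemma sc_re_nonneg_of_mem_ball {z : ℂ} (hz : z ∈ ball (0 : ℂ) 1) (hre : 0 ≤ z.re) :
    0 ≤ (sc z).re := by
  have him : |z.im| < 1 := (Complex.abs_im_le_norm z).trans_lt (by simpa using hz)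
  have hI : (sc (z.im * Complex.I)).re = 0 := by
    have := sc_I_pow_mul 1 z.im
    rw [pow_one, mul_comm] at this
    rw [this, Complex.I_mul_re, sc_ofReal_im him, neg_zero]
  have hzim : (z.im * Complex.I : ℂ) ∈ ball (0 : ℂ) 1 := by simpa using him
  have hzd : z - z.im * Complex.I = (z.re : ℂ) := by
    apply Complex.ext <;> simp
  rcases hre.eq_or_lt with h0 | h0
  · have : z = z.im * Complex.I := by
      rw [← h0] at hzd
      simpa [sub_eq_zero] using hzd
    rw [this, hI]
  · have hne : (z.im * Complex.I : ℂ) ≠ z := by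
      intro h
      rw [← sub_eq_zero, ← neg_sub, hzd] at h
      simp [h0.ne'] at h
    have := sc_quotient_re_pos hzim hz hne
    rw [hzd, Complex.div_ofReal_re, Complex.sub_re, hI, sub_zero] at this
    exact ((div_pos_iff_of_pos_right h0).1 this).le

lemma sc_re_nonneg {z : ℂ} (hz : ‖z‖ ≤ 1) (hre : 0 ≤ z.re) : 0 ≤ (sc z).re := by
  have h1 : Tendsto (fun t : ℝ => (t : ℂ) * z) (𝓝[Ico 0 1] 1) (𝓝[closedBall 0 1] z) := by
    refine tendsto_nhdsWithin_iff.2 ⟨?_, ?_⟩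
    · have : Continuous fun t : ℝ => (t : ℂ) * z := by fun_prop
      simpa using (this.tendsto 1).mono_left nhdsWithin_le_nhds
    · filter_upwards [self_mem_nhdsWithin] with t ht
      rw [mem_closedBall_zero_iff, norm_mul, Complex.norm_real, Real.norm_of_nonneg ht.1]
      nlinarith [ht.1, ht.2, norm_nonneg z]
  have h2 := (Complex.continuous_re.tendsto _).comp
    ((continuousOn_sc z (by simpa using hz)).tendsto.comp h1)
  have : (𝓝[Ico (0 : ℝ) 1] 1).NeBot := by
    rw [← mem_closure_iff_nhdsWithin_neBot, closure_Ico zero_ne_one]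
    exact right_mem_Icc.2 zero_le_one
  refine ge_of_tendsto h2 ?_
  filter_upwards [self_mem_nhdsWithin] with t ht
  refine sc_re_nonneg_of_mem_ball ?_ ?_
  · rw [mem_ball_zero_iff, norm_mul, Complex.norm_real, Real.norm_of_nonneg ht.1]
    nlinarith [ht.1, ht.2, norm_nonneg z]
  · rw [Complex.re_ofReal_mul]
    exact mul_nonneg ht.1 hre

lemma sc_im_nonneg {z : ℂ} (hz : ‖z‖ ≤ 1) (him : 0 ≤ z.im) : 0 ≤ (sc z).im := by
  have h3 : Complex.I ^ 3 = -Complex.I := by rw [pow_succ, Complex.I_sq]; ring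
  have := sc_re_nonneg (z := Complex.I ^ 3 * z) (by simpa using hz) (by simp [h3, him])
  rw [sc_I_pow_mul, h3] at this
  simpa using this

/-- On the open arc from `1` to `I` the tangent vector `I * z * scDeriv z` of the image curve is
parallel to `1 - I`. -/
lemma tangent_re_add_im {c s : ℝ} (hc : 0 < c) (hs : 0 < s) (h : c ^ 2 + s ^ 2 = 1) :
    (c + s * Complex.I : ℂ) ∈ scDomain ∧
    (scDeriv (c + s * Complex.I) * (Complex.I * (c + s * Complex.I))).re +
      (scDeriv (c + s * Complex.I) * (Complex.I * (c + s * Complex.I))).im = 0 := by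
  set z : ℂ := c + s * Complex.I with hz
  have hzre : z.re = c := by simp [hz]
  have hzim : z.im = s := by simp [hz]
  have hcs : 0 < c * s := mul_pos hc hs
  have h4 : z ^ 4 = (z * z) * (z * z) := by ring
  have hdom : z ∈ scDomain := by
    left
    rw [h4]
    simp only [Complex.sub_re, Complex.one_re, Complex.mul_re, Complex.mul_im, hzre, hzim]
    nlinarith [mul_pos hcs hcs]
  refine ⟨hdom, ?_⟩
  set D := scDeriv z * (Complex.I * z) with hD
  have hne : 1 - z ^ 4 ≠ 0 := Complex.slitPlane_ne_zero hdom
  have hD2 : D * D * ((4 * (c * s) : ℝ) : ℂ) = -Complex.I := by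
    have h1 : D * D = -(z * z) * (1 - z ^ 4)⁻¹ := by
      rw [← scDeriv_sq, hD]
      linear_combination (scDeriv z ^ 2 * z ^ 2) * Complex.I_sq
    have h2 : z * z * ((4 * (c * s) : ℝ) : ℂ) = Complex.I * (1 - z ^ 4) := by
      rw [h4]
      apply Complex.ext
      · simp only [Complex.sub_re, Complex.one_re, Complex.mul_re, Complex.mul_im, hzre, hzim,
          Complex.ofReal_re, Complex.ofReal_im, Complex.I_re, Complex.I_im, Complex.sub_im,
          Complex.one_im]
        ring
      · simp only [Complex.sub_re, Complex.one_re, Complex.mul_re, Complex.mul_im, hzre, hzim,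
          Complex.ofReal_re, Complex.ofReal_im, Complex.I_re, Complex.I_im, Complex.sub_im,
          Complex.one_im]
        linear_combination (c ^ 2 + s ^ 2 + 1) * h
    rw [h1]
    calc -(z * z) * (1 - z ^ 4)⁻¹ * ((4 * (c * s) : ℝ) : ℂ)
        = -(z * z * ((4 * (c * s) : ℝ) : ℂ)) * (1 - z ^ 4)⁻¹ := by ring
      _ = -Complex.I * ((1 - z ^ 4) * (1 - z ^ 4)⁻¹) := by rw [h2]; ring
      _ = -Complex.I := by rw [mul_inv_cancel₀ hne, mul_one]
  have hre := congrArg Complex.re hD2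
  have him := congrArg Complex.im hD2
  rw [Complex.re_mul_ofReal, Complex.mul_re, Complex.neg_re, Complex.I_re, neg_zero] at hre
  rw [Complex.im_mul_ofReal, Complex.mul_im, Complex.neg_im, Complex.I_im] at him
  have hre' : (D.re - D.im) * (D.re + D.im) = 0 := by
    have := (mul_eq_zero.1 hre).resolve_right (by positivity)
    linarith
  rcases mul_eq_zero.1 hre' with h5 | h5
  · have h6 : D.re = D.im := by linarith
    rw [h6] at him
    nlinarith [mul_nonneg (mul_self_nonneg D.im) hcs.le]
  · exact h5

lemma sc_re_add_im {θ : ℝ} (h0 : 0 ≤ θ) (h1 : θ ≤ Real.pi / 2) :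
    (sc (Complex.exp (θ * Complex.I))).re + (sc (Complex.exp (θ * Complex.I))).im =
      (sc 1).re + (sc 1).im := by
  rcases h0.eq_or_lt with rfl | h0
  · simp
  have hexp : ∀ t : ℝ, Complex.exp (t * Complex.I) = Real.cos t + Real.sin t * Complex.I := by
    intro t; rw [Complex.exp_mul_I, Complex.ofReal_cos, Complex.ofReal_sin]
  have hcont : ContinuousOn (fun t : ℝ => sc (Complex.exp (t * Complex.I))) (Icc 0 θ) :=
    continuousOn_sc.comp (by fun_prop) fun t _ => by simp [Complex.norm_exp_ofReal_mul_I]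
  have hder : ∀ t ∈ Ioo 0 θ, HasDerivAt (fun t : ℝ => (sc (Complex.exp (t * Complex.I))).re +
      (sc (Complex.exp (t * Complex.I))).im) 0 t := by
    intro t ht
    have hct : 0 < Real.cos t := Real.cos_pos_of_mem_Ioo ⟨by linarith [ht.1, Real.pi_pos],
      by linarith [ht.2]⟩
    have hst : 0 < Real.sin t := Real.sin_pos_of_pos_of_lt_pi ht.1
      (by linarith [ht.2, Real.pi_pos])
    obtain ⟨hdom, htan⟩ := tangent_re_add_im hct hst (Real.cos_sq_add_sin_sq t)
    rw [← hexp] at hdom htan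
    have h2 : HasDerivAt (fun t : ℝ => Complex.exp (t * Complex.I))
        (Complex.I * Complex.exp (t * Complex.I)) t := by
      refine (((Complex.ofRealCLM.hasDerivAt (x := t)).mul_const Complex.I).cexp).congr_deriv ?_
      simp [mul_comm]
    have h3 := (hasDerivAt_sc hdom).comp t h2
    refine ((Complex.reCLM.hasFDerivAt.comp_hasDerivAt t h3).add
      (Complex.imCLM.hasFDerivAt.comp_hasDerivAt t h3)).congr_deriv ?_
    exact htan
  obtain ⟨c, hc, h⟩ := exists_hasDerivAt_eq_slope
    (fun t : ℝ => (sc (Complex.exp (t * Complex.I))).re + (sc (Complex.exp (t * Complex.I))).im)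
    (fun _ => 0) h0
    ((Complex.continuous_re.comp_continuousOn hcont).add
      (Complex.continuous_im.comp_continuousOn hcont)) hder
  have := (div_eq_zero_iff.1 h.symm).resolve_right (by linarith)
  simp only [Complex.ofReal_zero, zero_mul, Complex.exp_zero] at this
  linarith

/-- The `ℓ¹` radius of the image of the disc under `sc`. -/
noncomputable def scRadius : ℝ := absSum (sc 1)

/-- The boundary circle is mapped into the boundary of a diamond. -/
lemma absSum_sc_of_norm_eq_one {z : ℂ} (hz : ‖z‖ = 1) : absSum (sc z) = scRadius := by
  have key : ∀ w : ℂ, ‖w‖ = 1 → 0 ≤ w.re → 0 ≤ w.im → absSum (sc w) = scRadius := by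
    intro w hw hre him
    rw [scRadius, absSum, absSum, abs_of_nonneg (sc_re_nonneg hw.le hre),
      abs_of_nonneg (sc_im_nonneg hw.le him), abs_of_nonneg (sc_re_nonneg (by simp) (by simp)),
      abs_of_nonneg (sc_im_nonneg (by simp) (by simp))]
    have h1 : w = Complex.exp (w.arg * Complex.I) := by
      have := Complex.norm_mul_exp_arg_mul_I w
      rw [hw, Complex.ofReal_one, one_mul] at this
      exact this.symm
    have h2 : |w.arg| ≤ Real.pi / 2 := Complex.abs_arg_le_pi_div_two_iff.2 hre
    have := sc_re_add_im (Complex.arg_nonneg_iff.2 him) ((le_abs_self _).trans h2)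
    rwa [← h1] at this
  obtain ⟨k, hk⟩ := exists_I_pow_mul z
  have hn : ‖Complex.I ^ (k : ℕ) * z‖ = 1 := by simpa using hz
  have hre : 0 ≤ (Complex.I ^ (k : ℕ) * z).re := (abs_nonneg _).trans hk
  rcases le_or_gt 0 (Complex.I ^ (k : ℕ) * z).im with him | him
  · have := key _ hn hre him
    rwa [sc_I_pow_mul, absSum_I_pow_mul] at this
  · have := key (Complex.I ^ ((k : ℕ) + 1) * z) (by simpa using hz)
      (by rw [pow_succ', mul_assoc, Complex.I_mul_re]; linarith)
      (by rw [pow_succ', mul_assoc, Complex.I_mul_im]; exact hre)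
    rwa [sc_I_pow_mul, absSum_I_pow_mul] at this

lemma image_sc_mem_nhds {A : Set ℂ} (hA : A ⊆ ball 0 1) (hAo : IsOpen A) {z : ℂ} (hz : z ∈ A) :
    sc '' A ∈ 𝓝 (sc z) := by
  have hz' := ball_subset_scDomain (hA hz)
  rw [← (hasStrictDerivAt_sc hz').map_nhds_eq (scDeriv_ne_zero hz')]
  exact image_mem_map (hAo.mem_nhds hz)

lemma isOpen_image_sc : IsOpen (sc '' ball 0 1) := by
  rw [isOpen_iff_mem_nhds]
  rintro _ ⟨z, hz, rfl⟩
  exact image_sc_mem_nhds subset_rfl isOpen_ball hz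

lemma exists_absSum_lt {W : Set ℂ} {w : ℂ} (hW : W ∈ 𝓝 w) : ∃ w' ∈ W, absSum w < absSum w' := by
  obtain ⟨ε, hε, hball⟩ := Metric.nhds_basis_closedBall.mem_iff.1 hW
  rcases le_total 0 w.re with h | h
  · refine ⟨w + ε, hball (by simp [abs_of_pos hε]), ?_⟩
    simp only [absSum, Complex.add_re, Complex.ofReal_re, Complex.add_im, Complex.ofReal_im]
    rw [abs_of_nonneg h, abs_of_nonneg (by linarith : 0 ≤ w.re + ε), add_zero]
    linarith
  · refine ⟨w - ε, hball (by simp [abs_of_pos hε]), ?_⟩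
    simp only [absSum, Complex.sub_re, Complex.ofReal_re, Complex.sub_im, Complex.ofReal_im]
    rw [abs_of_nonpos h, abs_of_nonpos (by linarith : w.re - ε ≤ 0), sub_zero]
    linarith

lemma absSum_sc_lt {z : ℂ} (hz : z ∈ ball (0 : ℂ) 1) : absSum (sc z) < scRadius := by
  obtain ⟨w, hw, hmax⟩ := (isCompact_closedBall (0 : ℂ) 1).exists_isMaxOn
    ⟨0, mem_closedBall_self zero_le_one⟩ (continuous_absSum.comp_continuousOn continuousOn_sc)
  -- An interior point is never a maximum of `absSum ∘ sc`, because `sc` is open there.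
  have hinterior : ∀ y ∈ ball (0 : ℂ) 1, absSum (sc y) < absSum (sc w) := by
    intro y hy
    obtain ⟨_, ⟨x, hx, rfl⟩, hlt⟩ := exists_absSum_lt (image_sc_mem_nhds subset_rfl isOpen_ball hy)
    exact hlt.trans_le (hmax (ball_subset_closedBall hx))
  have hw1 : ‖w‖ = 1 := by
    refine le_antisymm (by simpa using hw) (not_lt.1 fun h => ?_)
    exact lt_irrefl _ (hinterior w (by simpa using h))
  rw [← absSum_sc_of_norm_eq_one hw1]
  exact hinterior z hz

lemma scRadius_pos : 0 < scRadius := by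
  have := absSum_sc_lt (mem_ball_self zero_lt_one)
  simpa [sc_zero, absSum] using this

/-- `sc` maps the unit disc onto a diamond. -/
lemma image_sc : sc '' ball 0 1 = {w | absSum w < scRadius} := by
  refine Subset.antisymm (image_subset_iff.2 fun z hz => absSum_sc_lt hz) ?_
  have hconv : Convex ℝ {w : ℂ | absSum w < scRadius} := by
    intro x hx y hy a b ha hb hab
    simp only [mem_ofPred_eq] at hx hy ⊢
    have h1 := absSum_add_le (a • x) (b • y)
    rw [Complex.real_smul, Complex.real_smul, absSum_real_mul, absSum_real_mul, abs_of_nonneg ha,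
      abs_of_nonneg hb] at h1
    rw [Complex.real_smul, Complex.real_smul]
    refine h1.trans_lt ?_
    rcases ha.eq_or_lt with rfl | ha'
    · have : b = 1 := by linarith
      simpa [this] using hy
    · calc a * absSum x + b * absSum y < a * scRadius + b * scRadius :=
          add_lt_add_of_lt_of_le (mul_lt_mul_of_pos_left hx ha') (mul_le_mul_of_nonneg_left hy.le hb)
        _ = scRadius := by rw [← add_mul, hab, one_mul]
  refine hconv.isPreconnected.subset_of_closure_inter_subset isOpen_image_sc
    ⟨0, ?_, 0, mem_ball_self zero_lt_one, sc_zero⟩ ?_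
  · simpa [absSum] using scRadius_pos
  · rintro w ⟨hw, hw'⟩
    have hcl : closure (sc '' ball 0 1) ⊆ sc '' closedBall 0 1 :=
      closure_minimal (image_mono ball_subset_closedBall)
        ((isCompact_closedBall 0 1).image_of_continuousOn continuousOn_sc).isClosed
    obtain ⟨z, hz, rfl⟩ := hcl hw
    refine ⟨z, ?_, rfl⟩
    rw [mem_ball_zero_iff]
    refine lt_of_le_of_ne (by simpa using hz) fun h => ?_
    exact (absSum_sc_of_norm_eq_one h).not_lt hw'

lemma exists_sc_inverse : ∃ k : ℂ → ℂ, DifferentiableOn ℂ k (sc '' ball 0 1) ∧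
    ∀ z ∈ ball (0 : ℂ) 1, k (sc z) = z := by
  have hk : ∀ z ∈ ball (0 : ℂ) 1, Function.invFunOn sc (ball 0 1) (sc z) = z := fun z hz =>
    injOn_sc.leftInvOn_invFunOn hz
  refine ⟨Function.invFunOn sc (ball 0 1), ?_, hk⟩
  rintro _ ⟨z, hz, rfl⟩
  have hz' := ball_subset_scDomain hz
  have := (hasStrictDerivAt_sc hz').to_local_left_inverse (scDeriv_ne_zero hz')
    (g := Function.invFunOn sc (ball 0 1)) (by
      filter_upwards [isOpen_ball.mem_nhds hz] with y hy using hk y hy)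
  exact this.hasDerivAt.differentiableAt.differentiableWithinAt

end SchwarzChristoffel

/-! ### The domain and its dense orbit -/

section Assembly

lemma norm_eq_norm_zero (z : EuclideanSpace ℂ (Fin 1)) : ‖z‖ = ‖z 0‖ := by
  rw [EuclideanSpace.norm_eq]
  simp

lemma differentiable_coord {m : ℕ} (i : Fin m) :
    Differentiable ℂ fun z : EuclideanSpace ℂ (Fin m) => z i :=
  differentiable_euclidean.1 differentiable_id i

/-- In dimension one, the Schwarz–Christoffel map identifies the disc with the whole tile. -/
lemma hasDenseBall_tile_one : HasDenseBall (tile 1) := by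
  obtain ⟨k, hk, hkinv⟩ := exists_sc_inverse
  have hK := scRadius_pos
  have hK' : (scRadius : ℂ) ≠ 0 := by exact_mod_cast hK.ne'
  set g : EuclideanSpace ℂ (Fin 1) → EuclideanSpace ℂ (Fin 1) :=
    fun z => WithLp.toLp 2 fun _ => 1 + ((scRadius⁻¹ : ℝ) : ℂ) * sc (z 0) with hg
  set h : EuclideanSpace ℂ (Fin 1) → EuclideanSpace ℂ (Fin 1) :=
    fun w => WithLp.toLp 2 fun _ => k (scRadius * (w 0 - 1)) with hh
  have hball : ∀ {z : EuclideanSpace ℂ (Fin 1)}, z ∈ ball 0 1 ↔ z 0 ∈ ball (0 : ℂ) 1 := by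
    intro z; rw [mem_ball_zero_iff, mem_ball_zero_iff, norm_eq_norm_zero]
  have hmem : ∀ {w : EuclideanSpace ℂ (Fin 1)}, w ∈ tile 1 →
      (scRadius : ℂ) * (w 0 - 1) ∈ sc '' ball 0 1 := by
    intro w hw
    rw [image_sc, mem_ofPred_eq, absSum_real_mul, abs_of_pos hK]
    have := mul_lt_mul_of_pos_left (hw 0) hK
    rwa [mul_one] at this
  have himg : g '' ball 0 1 = tile 1 := by
    apply Subset.antisymm
    · rintro _ ⟨z, hz, rfl⟩ i
      have h1 := absSum_sc_lt (hball.1 hz)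
      simp only [hg, add_sub_cancel_left]
      rw [absSum_real_mul, abs_of_pos (inv_pos.2 hK), inv_mul_lt_one₀ hK]
      exact h1
    · intro w hw
      obtain ⟨x, hx, hxw⟩ := hmem hw
      refine ⟨WithLp.toLp 2 fun _ => x, hball.2 hx, ?_⟩
      ext i
      have hi : i = 0 := Subsingleton.elim _ _
      subst hi
      simp only [hg, hxw]
      push_cast
      rw [inv_mul_cancel_left₀ hK', add_sub_cancel]
  refine ⟨g, h, ?_, himg.subset, by rw [himg]; exact isOpen_tile, by rw [himg]; exact subset_closure,
    ?_, ?_⟩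
  · refine differentiableOn_euclidean.2 fun _ z hz => DifferentiableAt.differentiableWithinAt ?_
    have h1 := (hasDerivAt_sc (ball_subset_scDomain (hball.1 hz))).differentiableAt.comp z
      (differentiable_coord 0 z)
    exact (h1.const_mul ((scRadius⁻¹ : ℝ) : ℂ)).const_add 1
  · rw [himg]
    refine differentiableOn_euclidean.2 fun _ => hk.comp
      (f := fun w : EuclideanSpace ℂ (Fin 1) => (scRadius : ℂ) * (w 0 - 1)) ?_ fun w hw => hmem hw
    exact (((differentiable_coord 0).sub_const 1).const_mul _).differentiableOn
  · intro z hz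
    ext i
    have hi : i = 0 := Subsingleton.elim _ _
    subst hi
    simp only [hh, hg, add_sub_cancel_left]
    push_cast
    rw [mul_inv_cancel_left₀ hK']
    exact hkinv _ (hball.1 hz)

lemma hasDenseBall_tile : ∀ m : ℕ, HasDenseBall (tile m)
  | 0 => by
    have huniv : ∀ A : Set (EuclideanSpace ℂ (Fin 0)), A.Nonempty → A = univ := fun A hA =>
      Subsingleton.eq_univ_of_nonempty hA
    have hb : ball (0 : EuclideanSpace ℂ (Fin 0)) 1 = univ :=
      huniv _ ⟨0, mem_ball_self zero_lt_one⟩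
    have ht : tile 0 = univ := huniv _ ⟨_, tileCenter_mem⟩
    refine ⟨id, id, differentiableOn_id, ?_, ?_, ?_, differentiableOn_id, fun _ _ => rfl⟩ <;>
      simp [hb, ht]
  | 1 => hasDenseBall_tile_one
  | m + 2 => hasDenseBall_of_two_le_finrank (by simp) isOpen_tile convex_tile ⟨_, tileCenter_mem⟩

variable {m : ℕ}

lemma rootMap_powFour {z : EuclideanSpace ℂ (Fin m)} (hz : z ∈ tile m) :
    rootMap (powFour z) = z := by
  ext i
  exact root_pow (sector_of_mem_tile hz i)

lemma powFour_rootMap (w : EuclideanSpace ℂ (Fin m)) : powFour (rootMap w) = w := by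
  ext i
  exact root_pow_four (w i)

lemma differentiable_powFour : Differentiable ℂ (powFour (m := m)) :=
  differentiable_euclidean.2 fun i => (differentiable_coord i).pow 4

/-- The set of points all of whose coordinates avoid the branch cut of the fourth root. -/
def slitProduct (m : ℕ) : Set (EuclideanSpace ℂ (Fin m)) := {w | ∀ i, w i ∈ Complex.slitPlane}

lemma isOpen_slitProduct : IsOpen (slitProduct m) := by
  have : slitProduct m = ⋂ i, {w | w i ∈ Complex.slitPlane} := by ext z; simp [slitProduct]
  rw [this]
  exact isOpen_iInter_of_finite fun i =>
    Complex.isOpen_slitPlane.preimage (differentiable_coord i).continuous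

lemma powFour_mem_slitProduct {z : EuclideanSpace ℂ (Fin m)} (hz : z ∈ tile m) :
    powFour z ∈ slitProduct m := fun i => pow_four_mem_slitPlane (sector_of_mem_tile hz i)

lemma differentiableOn_rootMap : DifferentiableOn ℂ (rootMap (m := m)) (slitProduct m) :=
  differentiableOn_euclidean.2 fun i w hw => by
    have h1 := (differentiableAt_root (hw i)).comp w (differentiable_coord i w)
    exact h1.differentiableWithinAt

lemma isOpen_image_powFour {A : Set (EuclideanSpace ℂ (Fin m))} (hA : IsOpen A)
    (hAt : A ⊆ tile m) : IsOpen (powFour '' A) := by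
  have : powFour '' A = slitProduct m ∩ rootMap ⁻¹' A := by
    apply Subset.antisymm
    · rintro _ ⟨z, hz, rfl⟩
      refine ⟨powFour_mem_slitProduct (hAt hz), ?_⟩
      rw [mem_preimage, rootMap_powFour (hAt hz)]
      exact hz
    · rintro w ⟨-, hw⟩
      exact ⟨rootMap w, hw, powFour_rootMap w⟩
  rw [this]
  exact differentiableOn_rootMap.continuousOn.isOpen_inter_preimage isOpen_slitProduct hA

lemma isBounded_image_powFour : Bornology.IsBounded (powFour '' tile m) :=
  ((isBounded_tile.isCompact_closure.image differentiable_powFour.continuous).isBounded).subset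
    (image_mono subset_closure)

/-- The holomorphic map `w ↦ (2 (w ^ (1/4) - 1)) ^ 4` in each coordinate; it is semiconjugate to
`tileMap` through `powFour`. -/
noncomputable def powerMap (w : EuclideanSpace ℂ (Fin m)) : EuclideanSpace ℂ (Fin m) :=
  WithLp.toLp 2 fun i => (2 * (root (w i) - 1)) ^ 4

lemma powerMap_powFour {z : EuclideanSpace ℂ (Fin m)} (hz : z ∈ tile m) :
    powerMap (powFour z) = powFour (tileMap z) := by
  ext i
  have h1 := root_pow (sector_of_mem_tile hz i)
  have h2 := root_pow_four ((2 * (z i - 1)) ^ 4)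
  simp only [powerMap, powFour, tileMap]
  rw [h1, h2]

lemma differentiableOn_powerMap : DifferentiableOn ℂ (powerMap (m := m)) (slitProduct m) :=
  differentiableOn_euclidean.2 fun i w hw => by
    have h1 := (differentiableAt_root (hw i)).comp w (differentiable_coord i w)
    exact (((h1.sub_const 1).const_mul (2 : ℂ)).pow 4).differentiableWithinAt

end Assembly

/-- **Theorem 1.2.** There is a bounded domain `U ⊆ ℂ^m`, biholomorphic to the unit ball via
a map `g` (with holomorphic inverse `h`), and a holomorphic map `F : U → ℂ^m` with a dense
orbit `{p_n} ⊆ U`, i.e. `F(p_n) = p_{n+1}` for all `n` and `{p_n}` is dense in `U`. -/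
theorem exists_bounded_domain_biholo_ball_with_dense_orbit (m : ℕ) :
    ∃ (U : Set (EuclideanSpace ℂ (Fin m)))
      (g h F : EuclideanSpace ℂ (Fin m) → EuclideanSpace ℂ (Fin m))
      (p : ℕ → EuclideanSpace ℂ (Fin m)),
      IsOpen U ∧ IsConnected U ∧ Bornology.IsBounded U ∧
      -- `g` is a biholomorphism from the unit ball onto `U`, with inverse `h`
      DifferentiableOn ℂ g (ball 0 1) ∧ g '' (ball 0 1) = U ∧
      DifferentiableOn ℂ h U ∧
      (∀ z ∈ ball (0 : EuclideanSpace ℂ (Fin m)) 1, h (g z) = z) ∧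
      (∀ w ∈ U, g (h w) = w) ∧
      -- `F` is holomorphic on `U` and has a dense orbit `{p_n} ⊆ U`
      DifferentiableOn ℂ F U ∧
      (∀ n, p n ∈ U) ∧ (∀ n, F (p n) = p (n + 1)) ∧
      U ⊆ closure (Set.range p) := by
  obtain ⟨g, h, hg, hgt, hgo, hgd, hh, hhg⟩ := hasDenseBall_tile m
  obtain ⟨z₀, hz₀, hdense⟩ := exists_dense_orbit hgo hgt hgd
  have hslit : powFour '' (g '' ball 0 1) ⊆ slitProduct m :=
    image_subset_iff.2 fun z hz => powFour_mem_slitProduct (hgt hz)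
  have hinv : ∀ z ∈ ball (0 : EuclideanSpace ℂ (Fin m)) 1, h (rootMap (powFour (g z))) = z := by
    intro z hz
    rw [rootMap_powFour (hgt (mem_image_of_mem g hz)), hhg z hz]
  have hgf : DifferentiableOn ℂ (fun z => powFour (g z)) (ball 0 1) :=
    differentiable_powFour.comp_differentiableOn hg
  have himg : (fun z => powFour (g z)) '' ball 0 1 = powFour '' (g '' ball 0 1) :=
    (image_image powFour g _).symm
  refine ⟨powFour '' (g '' ball 0 1), fun z => powFour (g z), fun w => h (rootMap w), powerMap,
    fun n => powFour (tileMap^[n] z₀), isOpen_image_powFour hgo hgt, ?_,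
    isBounded_image_powFour.subset (image_mono hgt), hgf, himg, ?_, hinv, ?_,
    differentiableOn_powerMap.mono hslit, fun n => mem_image_of_mem _ (hz₀ n), fun n => ?_, ?_⟩
  · rw [← himg]
    have hconn : IsConnected (ball (0 : EuclideanSpace ℂ (Fin m)) 1) :=
      (convex_ball _ _).isConnected ⟨0, mem_ball_self zero_lt_one⟩
    exact hconn.image _ hgf.continuousOn
  · refine hh.comp (differentiableOn_rootMap.mono hslit) ?_
    rintro _ ⟨z, hz, rfl⟩
    rw [rootMap_powFour (hgt hz)]
    exact hz
  · rintro _ ⟨_, ⟨z, hz, rfl⟩, rfl⟩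
    simp only [hinv z hz]
  · simp only [powerMap_powFour (hgt (hz₀ n)), Function.iterate_succ_apply']
  · rintro _ ⟨z, hz, rfl⟩
    have := image_closure_subset_closure_image differentiable_powFour.continuous
      (mem_image_of_mem powFour (hdense (hgt hz)))
    rwa [← range_comp] at this
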